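/- arXiv:1302.0517 — 2 statements merged into one kernel-verified Lean document; each statement's English description precedes it below -/
import Mathlib

section
/- For every integer n > 2^5 = 32, every positive integer N, and every n-linear form U : (ℂ^N)^n → ℂ, one has (∑_{i₁,…,iₙ=1}^N |U(e_{i₁},…,e_{iₙ})|^{2n/(n+1)})^{(n+1)/(2n)} ≤ 1.00123230777 · (n-1)^{0.304975} · ‖U‖. -/
open Real

/-- The Bohnenblust--Hille quantity of an `n`-linear form on `ℓ_∞^N` over `ℂ`:
`(∑_{i₁,…,iₙ} |U(e_{i₁},…,e_{iₙ})|^{2n/(n+1)})^{(n+1)/(2n)}`. -/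
noncomputable def BHcomplex (n N : ℕ)
    (U : ContinuousMultilinearMap ℂ (fun _ : Fin n => (Fin N → ℂ)) ℂ) : ℝ :=
  (∑ i : Fin n → Fin N,
      ‖U (fun k => Pi.single (i k) (1 : ℂ))‖ ^ ((2 * n : ℝ) / (n + 1)))
    ^ ((n + 1 : ℝ) / (2 * n))

/-
For an `n`-linear form bounded by `M` on the polydisc, evaluating one variable at independent
Steinhaus variables gives `(n-1)`-linear forms with the same bound. A Khinchine inequality for
Steinhaus sums then transfers the estimate of order `n - 1` to mixed `ℓ^p(ℓ²)` sums of the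
coefficients, one for each choice of variable, and Blei's interpolation of these `n` mixed sums
yields the estimate of order `n`.

The Khinchine inequality comes from an entropy bound for `Z = ∑ aₖ Xₖ`, namely
`E |Z|² log |Z|² ≤ ‖a‖² log ‖a‖² + (1 - γ) ‖a‖²`: the mean of `|z|² log |z|²` over a circle is a
convex function of the squared radius, so the Steinhaus variables can be replaced one at a time by
complex Gaussians of the same variance, where `1 - γ` is the derivative of `Γ` at `2`.
Each step from `n` to `n + 1` costs a factor `exp ((1 - γ) / (2n))`, so the final constant is
`exp ((1 - γ) / 2 * Hₙ₋₁)`, and `(1 - γ) / 2 < 1 / 4` leaves room for the exponent `0.304975`.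
-/

open MeasureTheory ProbabilityTheory Set
open scoped NNReal ENNReal

section Blei

variable {α : Type*} [Fintype α]

theorem sum_prod_rpow_le_prod_sum_rpow {ι : Type*} [Fintype ι] (f : ι → α → ℝ≥0) (w : ι → ℝ)
    (hw : ∀ k, 0 ≤ w k) (hw_sum : ∑ k, w k = 1) :
    ∑ x, ∏ k, f k x ^ w k ≤ ∏ k, (∑ x, f k x) ^ w k := by
  let _ : MeasurableSpace α := ⊤
  have h := ENNReal.lintegral_prod_norm_pow_le (μ := Measure.count) Finset.univ
    (f := fun k x => (f k x : ℝ≥0∞)) (fun _ _ => Measurable.of_discrete.aemeasurable)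
    hw_sum (fun k _ => hw k)
  simp only [lintegral_count, tsum_fintype, ← ENNReal.ofNNReal_finsetSum,
    ← ENNReal.coe_rpow_of_nonneg _ (hw _)] at h
  exact_mod_cast h

theorem sum_rpow_mul_rpow_le (f g : α → ℝ≥0) {θ : ℝ} (hθ₀ : 0 ≤ θ) (hθ₁ : θ ≤ 1) :
    ∑ x, f x ^ θ * g x ^ (1 - θ) ≤ (∑ x, f x) ^ θ * (∑ x, g x) ^ (1 - θ) := by
  simpa [Fin.prod_univ_two] using
    sum_prod_rpow_le_prod_sum_rpow ![f, g] ![θ, 1 - θ] (by simp [Fin.forall_fin_two, hθ₀, hθ₁])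
      (by simp [Fin.sum_univ_two])

theorem sum_eq_sum_sum_insertNth {n : ℕ} {M : Type*} [AddCommMonoid M]
    (F : (Fin (n + 1) → α) → M) (k : Fin (n + 1)) :
    ∑ i, F i = ∑ j : Fin n → α, ∑ x, F (k.insertNth x j) := by
  classical
  rw [Finset.sum_comm, ← Fintype.sum_prod_type']
  exact (Fintype.sum_equiv (Fin.insertNthEquiv (fun _ => α) k) _ _ fun _ => rfl).symm

omit [Fintype α] in
theorem removeNth_succ_insertNth_zero {n : ℕ} (k : Fin (n + 1)) (x : α) (j : Fin (n + 1) → α) :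
    k.succ.removeNth ((0 : Fin (n + 2)).insertNth x j : Fin (n + 2) → α)
      = (0 : Fin (n + 1)).insertNth x (k.removeNth j) := by
  funext l
  refine Fin.cases ?_ (fun l => ?_) l <;> simp [Fin.removeNth]

theorem loomisWhitney_one (g : Fin 2 → (Fin 1 → α) → ℝ≥0) :
    ∑ i : Fin 2 → α, ∏ k, g k (k.removeNth i) = ∏ k, ∑ j, g k j := by
  have h_one (i : Fin 2 → α) : Fin.removeNth 1 i = fun _ => i 0 := by
    funext l; simp [Fin.removeNth, Subsingleton.elim l 0]
  have h_swap (j : Fin 1 → α) :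
      ∑ x, g 1 (Fin.removeNth 1 ((0 : Fin 2).insertNth x j : Fin 2 → α)) = ∑ j', g 1 j' := by
    simp only [h_one, Fin.insertNth_apply_same]
    exact Fintype.sum_equiv (Equiv.funUnique (Fin 1) α).symm _ _ fun _ => rfl
  simp only [sum_eq_sum_sum_insertNth _ (0 : Fin 2), Fin.prod_univ_two, Fin.removeNth_insertNth,
    ← Finset.mul_sum, h_swap, Finset.sum_mul]

theorem loomisWhitney {n : ℕ} (hn : 1 ≤ n) (g : Fin (n + 1) → (Fin n → α) → ℝ≥0) :
    ∑ i : Fin (n + 1) → α, ∏ k, g k (k.removeNth i) ^ (n : ℝ)⁻¹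
      ≤ ∏ k, (∑ j, g k j) ^ (n : ℝ)⁻¹ := by
  induction n, hn using Nat.le_induction with
  | base => simpa using (loomisWhitney_one g).le
  | succ n hn ih =>
    have : (0 : ℝ) < n := by exact_mod_cast hn
    set θ : ℝ := ((n + 1 : ℕ) : ℝ)⁻¹ with hθ
    have hθ₀ : 0 ≤ θ := by positivity
    have hθ_mul : (n : ℝ)⁻¹ * (1 - θ) = θ := by
      rw [hθ]
      push_cast
      field_simp
      ring
    have hθ₁ : 0 ≤ 1 - θ := by rw [hθ, sub_nonneg]; exact inv_le_one_of_one_le₀ (by simp)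
    let h (k : Fin (n + 1)) (l : Fin n → α) : ℝ≥0 :=
      ∑ x, g k.succ ((0 : Fin (n + 1)).insertNth x l)
    have h_sum (k : Fin (n + 1)) : ∑ l, h k l = ∑ j, g k.succ j :=
      (sum_eq_sum_sum_insertNth _ 0).symm
    have h_pow (f : Fin (n + 1) → ℝ≥0) : (∏ k, f k ^ (n : ℝ)⁻¹) ^ (1 - θ) = ∏ k, f k ^ θ := by
      simp only [← NNReal.finsetProd_rpow, ← NNReal.rpow_mul, hθ_mul]
    let H (j : Fin (n + 1) → α) : ℝ≥0 := ∏ k : Fin (n + 1), h k (k.removeNth j) ^ (n : ℝ)⁻¹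
    have h_inner (j : Fin (n + 1) → α) :
        ∑ x, ∏ k : Fin (n + 1), g k.succ ((0 : Fin (n + 1)).insertNth x (k.removeNth j)) ^ θ
          ≤ H j ^ (1 - θ) := by
      rw [h_pow]
      exact sum_prod_rpow_le_prod_sum_rpow _ (fun _ => θ) (fun _ => hθ₀) (by simp [hθ]; field_simp)
    calc ∑ i : Fin (n + 2) → α, ∏ k, g k (k.removeNth i) ^ θ
        = ∑ j, g 0 j ^ θ * ∑ x, ∏ k : Fin (n + 1),
            g k.succ ((0 : Fin (n + 1)).insertNth x (k.removeNth j)) ^ θ := by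
          rw [sum_eq_sum_sum_insertNth _ 0]
          simp only [Fin.prod_univ_succ, Fin.removeNth_insertNth, removeNth_succ_insertNth_zero,
            Finset.mul_sum]
      _ ≤ ∑ j, g 0 j ^ θ * H j ^ (1 - θ) := by gcongr with j; exact h_inner j
      _ ≤ (∑ j, g 0 j) ^ θ * (∑ j, H j) ^ (1 - θ) := sum_rpow_mul_rpow_le _ H hθ₀ (by linarith)
      _ ≤ (∑ j, g 0 j) ^ θ * (∏ k : Fin (n + 1), (∑ l, h k l) ^ (n : ℝ)⁻¹) ^ (1 - θ) := by
          gcongr; exact ih h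
      _ = (∑ j, g 0 j) ^ θ * ∏ k : Fin (n + 1), (∑ j, g k.succ j) ^ θ := by
          rw [h_pow]; simp only [h_sum]
      _ = ∏ k, (∑ j, g k j) ^ θ := (Fin.prod_univ_succ fun k => (∑ j, g k j) ^ θ).symm

/-- The sum of `β` over the line in direction `k` through the points projecting to `j`. -/
noncomputable def lineSum {n : ℕ} (β : (Fin (n + 1) → α) → ℝ≥0) (k : Fin (n + 1))
    (j : Fin n → α) : ℝ≥0 :=
  ∑ x, β (k.insertNth x j)

theorem sum_mul_lineSum_rpow_neg {n : ℕ} (β : (Fin (n + 1) → α) → ℝ≥0) (k : Fin (n + 1)) {r : ℝ}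
    (hr : r < 1) :
    ∑ i, β i * lineSum β k (k.removeNth i) ^ (-r) = ∑ j, lineSum β k j ^ (1 - r) := by
  rw [sum_eq_sum_sum_insertNth _ k]
  refine Finset.sum_congr rfl fun j _ => ?_
  simp only [Fin.removeNth_insertNth, ← Finset.sum_mul]
  rw [← lineSum, sub_eq_add_neg, NNReal.rpow_one_add' (by linarith)]

theorem rpow_eq_blei_factorization {n : ℕ} (hn : 1 ≤ n) (b : ℝ≥0)
    (a : Fin (n + 1) → ℝ≥0) (ha : ∀ k, a k ≠ 0) :
    b ^ ((n + 1) / (n + 2) : ℝ)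
      = (∏ k, (b * a k ^ (-(n + 1 : ℝ)⁻¹)) ^ (n + 1 : ℝ)⁻¹) ^ ((n + 1) / (n + 2) : ℝ)
        * (∏ k, (a k ^ (1 - (n + 1 : ℝ)⁻¹)) ^ (n : ℝ)⁻¹) ^ (1 - (n + 1) / (n + 2) : ℝ) := by
  have : (0 : ℝ) < n := by exact_mod_cast hn
  have h_exp : -(n + 1 : ℝ)⁻¹ * (n + 1 : ℝ)⁻¹ * ((n + 1) / (n + 2))
      + (1 - (n + 1 : ℝ)⁻¹) * (n : ℝ)⁻¹ * (1 - (n + 1) / (n + 2)) = 0 := by field_simp; ring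
  have h_factor (k : Fin (n + 1)) :
      ((b * a k ^ (-(n + 1 : ℝ)⁻¹)) ^ (n + 1 : ℝ)⁻¹) ^ ((n + 1) / (n + 2) : ℝ)
        * ((a k ^ (1 - (n + 1 : ℝ)⁻¹)) ^ (n : ℝ)⁻¹) ^ (1 - (n + 1) / (n + 2) : ℝ)
      = b ^ ((n + 2 : ℝ)⁻¹) := by
    simp only [NNReal.mul_rpow, ← NNReal.rpow_mul]
    rw [mul_assoc, ← NNReal.rpow_add (ha k), h_exp, NNReal.rpow_zero, mul_one]
    congr 1
    field_simp
  rw [← NNReal.finsetProd_rpow, ← NNReal.finsetProd_rpow, ← Finset.prod_mul_distrib,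
    Finset.prod_congr rfl fun k _ => h_factor k, Finset.prod_const, ← NNReal.rpow_mul_natCast]
  congr 1
  simp only [Finset.card_univ, Fintype.card_fin, Nat.cast_add, Nat.cast_one]
  field_simp

theorem sum_prod_mul_lineSum_rpow_le {n : ℕ} (hn : 1 ≤ n) (β : (Fin (n + 1) → α) → ℝ≥0) {T : ℝ≥0}
    (hT : ∀ k, ∑ j, lineSum β k j ^ (1 - (n + 1 : ℝ)⁻¹) ≤ T) :
    ∑ i, ∏ k : Fin (n + 1), (β i * lineSum β k (k.removeNth i) ^ (-(n + 1 : ℝ)⁻¹)) ^ (n + 1 : ℝ)⁻¹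
      ≤ T := by
  have hn₀ : (0 : ℝ) < n := by exact_mod_cast hn
  have h_lt_one : (n + 1 : ℝ)⁻¹ < 1 := inv_lt_one_of_one_lt₀ (by linarith)
  calc ∑ i, ∏ k : Fin (n + 1),
        (β i * lineSum β k (k.removeNth i) ^ (-(n + 1 : ℝ)⁻¹)) ^ (n + 1 : ℝ)⁻¹
      ≤ ∏ k : Fin (n + 1),
          (∑ i, β i * lineSum β k (k.removeNth i) ^ (-(n + 1 : ℝ)⁻¹)) ^ (n + 1 : ℝ)⁻¹ :=
        sum_prod_rpow_le_prod_sum_rpow _ (fun _ => (n + 1 : ℝ)⁻¹) (fun _ => by positivity)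
          (by simp; field_simp)
    _ ≤ ∏ _k : Fin (n + 1), T ^ (n + 1 : ℝ)⁻¹ := by
        gcongr with k
        rw [sum_mul_lineSum_rpow_neg β k h_lt_one]
        exact hT k
    _ = T := by
        rw [Finset.prod_const, ← NNReal.rpow_mul_natCast]
        simp [inv_mul_cancel₀ (show (n + 1 : ℝ) ≠ 0 by positivity)]

theorem sum_prod_lineSum_rpow_le {n : ℕ} (hn : 1 ≤ n) (β : (Fin (n + 1) → α) → ℝ≥0) {T : ℝ≥0}
    {p : ℝ} (hT : ∀ k, ∑ j, lineSum β k j ^ p ≤ T) :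
    ∑ i : Fin (n + 1) → α, ∏ k, (lineSum β k (k.removeNth i) ^ p) ^ (n : ℝ)⁻¹
      ≤ T ^ ((n : ℝ)⁻¹ * (n + 1)) :=
  calc ∑ i : Fin (n + 1) → α, ∏ k, (lineSum β k (k.removeNth i) ^ p) ^ (n : ℝ)⁻¹
      ≤ ∏ k : Fin (n + 1), (∑ j, lineSum β k j ^ p) ^ (n : ℝ)⁻¹ :=
        loomisWhitney hn fun k j => lineSum β k j ^ p
    _ ≤ ∏ _k : Fin (n + 1), T ^ (n : ℝ)⁻¹ := by gcongr with k; exact hT k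
    _ = T ^ ((n : ℝ)⁻¹ * (n + 1)) := by
        rw [Finset.prod_const, ← NNReal.rpow_mul_natCast]
        simp

theorem blei {n : ℕ} (hn : 1 ≤ n) (β : (Fin (n + 1) → α) → ℝ≥0) (T : ℝ≥0)
    (hT : ∀ k, ∑ j, lineSum β k j ^ (n / (n + 1) : ℝ) ≤ T) :
    ∑ i, β i ^ ((n + 1) / (n + 2) : ℝ) ≤ T ^ ((n + 1) ^ 2 / (n * (n + 2)) : ℝ) := by
  have : (0 : ℝ) < n := by exact_mod_cast hn
  set r : ℝ := (n + 1 : ℝ)⁻¹ with hr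
  set θ : ℝ := (n + 1) / (n + 2) with hθ
  have hθ₁ : 0 ≤ 1 - θ := by rw [hθ, sub_nonneg, div_le_one (by positivity)]; linarith
  have h_one_sub_r : 1 - r = n / (n + 1) := by rw [hr]; field_simp; ring
  rw [← h_one_sub_r] at hT
  let X (i : Fin (n + 1) → α) : ℝ≥0 :=
    ∏ k : Fin (n + 1), (β i * lineSum β k (k.removeNth i) ^ (-r)) ^ r
  let Y (i : Fin (n + 1) → α) : ℝ≥0 :=
    ∏ k : Fin (n + 1), (lineSum β k (k.removeNth i) ^ (1 - r)) ^ (n : ℝ)⁻¹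
  have hXY (i : Fin (n + 1) → α) : β i ^ θ ≤ X i ^ θ * Y i ^ (1 - θ) := by
    rcases eq_or_ne (β i) 0 with hb | hb
    · rw [hb, NNReal.zero_rpow (by positivity)]
      exact zero_le
    · refine (rpow_eq_blei_factorization hn _ _ fun k hk => hb ?_).le
      simpa using Finset.sum_eq_zero_iff.1 hk (i k) (Finset.mem_univ _)
  calc ∑ i, β i ^ θ ≤ ∑ i, X i ^ θ * Y i ^ (1 - θ) := Finset.sum_le_sum fun i _ => hXY i
    _ ≤ (∑ i, X i) ^ θ * (∑ i, Y i) ^ (1 - θ) :=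
      sum_rpow_mul_rpow_le X Y (by positivity) (by linarith)
    _ ≤ T ^ θ * (T ^ ((n : ℝ)⁻¹ * (n + 1))) ^ (1 - θ) := by
      gcongr
      · exact sum_prod_mul_lineSum_rpow_le hn β hT
      · exact sum_prod_lineSum_rpow_le hn β hT
    _ = T ^ ((n + 1) ^ 2 / (n * (n + 2)) : ℝ) := by
      rw [← NNReal.rpow_mul,
        ← NNReal.rpow_add_of_nonneg _ (by positivity) (mul_nonneg (by positivity) hθ₁)]
      congr 1
      rw [hθ]
      field_simp
      ring

end Blei

section NormSqLog

/-- The function `z ↦ |z|² log |z|²`, whose averages measure the derivative in `p` of `L^p` norms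
at `p = 2`. -/
noncomputable def normSqLog (z : ℂ) : ℝ := ‖z‖ ^ 2 * log (‖z‖ ^ 2)

@[fun_prop]
theorem continuous_normSqLog : Continuous normSqLog :=
  continuous_mul_log.comp (by fun_prop : Continuous fun z : ℂ => ‖z‖ ^ 2)

theorem normSqLog_mul (w z : ℂ) :
    normSqLog (w * z) = ‖w‖ ^ 2 * normSqLog z + ‖z‖ ^ 2 * normSqLog w := by
  rcases eq_or_ne w 0 with rfl | hw
  · simp [normSqLog]
  rcases eq_or_ne z 0 with rfl | hz
  · simp [normSqLog]
  simp only [normSqLog, norm_mul, mul_pow]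
  rw [log_mul (by positivity) (by positivity)]
  ring

theorem normSqLog_congr {w z : ℂ} (h : ‖w‖ = ‖z‖) : normSqLog w = normSqLog z := by
  rw [normSqLog, normSqLog, h]

theorem abs_mul_log_le {x : ℝ} (hx : 0 ≤ x) : |x * log x| ≤ 1 + x ^ 2 := by
  rcases hx.eq_or_lt with rfl | hx
  · simp
  have h_lower := mul_le_mul_of_nonneg_left (one_sub_inv_le_log_of_pos hx) hx.le
  rw [mul_sub, mul_inv_cancel₀ hx.ne'] at h_lower
  have h_upper := mul_le_mul_of_nonneg_left (log_le_sub_one_of_pos hx) hx.le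
  exact abs_le.2 ⟨by nlinarith, by nlinarith⟩

theorem integrable_normSqLog_add {Ω : Type*} [MeasurableSpace Ω] {P : Measure Ω}
    [IsFiniteMeasure P] {Z : Ω → ℂ} (hZ : MemLp Z 4 P) (w : ℂ) :
    Integrable (fun ω => normSqLog (w + Z ω)) P := by
  have h_pow : Integrable (fun ω => ‖w + Z ω‖ ^ 4) P :=
    ((memLp_const w).add hZ).integrable_norm_pow four_ne_zero
  refine ((integrable_const 1).add h_pow).mono'
    (continuous_normSqLog.comp_aestronglyMeasurable (hZ.1.const_add w)) (.of_forall fun ω => ?_)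
  simpa [normSqLog, ← pow_mul] using abs_mul_log_le (sq_nonneg ‖w + Z ω‖)

variable {μ ν : Measure ℂ}

theorem memLp_id_conv [IsFiniteMeasure μ] [IsFiniteMeasure ν] {p : ℝ≥0∞} (hμ : MemLp id p μ)
    (hν : MemLp id p ν) : MemLp id p (μ ∗ ν) := by
  rw [Measure.conv, memLp_map_measure_iff (by fun_prop) (by fun_prop)]
  exact (hμ.comp_fst ν).add (hν.comp_snd μ)

theorem integral_norm_const_add_sq {Ω E : Type*} [MeasurableSpace Ω] [NormedAddCommGroup E]
    [InnerProductSpace ℝ E] [CompleteSpace E] {P : Measure Ω} [IsProbabilityMeasure P] {Z : Ω → E}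
    (hZ : MemLp Z 2 P) (hZ₀ : ∫ ω, Z ω ∂P = 0) (w : E) :
    ∫ ω, ‖w + Z ω‖ ^ 2 ∂P = ‖w‖ ^ 2 + ∫ ω, ‖Z ω‖ ^ 2 ∂P := by
  have h_int : Integrable Z P := hZ.integrable one_le_two
  have h_inner : Integrable (fun ω => 2 * inner ℝ w (Z ω)) P := (h_int.const_inner w).const_mul 2
  have h_sq : Integrable (fun ω => ‖Z ω‖ ^ 2) P := hZ.integrable_norm_pow two_ne_zero
  have h_rest : Integrable (fun ω => 2 * inner ℝ w (Z ω) + ‖Z ω‖ ^ 2) P := h_inner.add h_sq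
  simp only [norm_add_sq_real, add_assoc]
  rw [integral_add (integrable_const _) h_rest, integral_add h_inner h_sq, integral_const_mul,
    integral_inner h_int, hZ₀]
  simp

theorem integral_norm_sq_conv [IsProbabilityMeasure μ] [IsProbabilityMeasure ν]
    (hμ : MemLp id 2 μ) (hν : MemLp id 2 ν) (hν₀ : ∫ z, z ∂ν = 0) :
    ∫ z, ‖z‖ ^ 2 ∂(μ ∗ ν) = ∫ z, ‖z‖ ^ 2 ∂μ + ∫ z, ‖z‖ ^ 2 ∂ν := by
  have h_int : Integrable (fun z : ℂ => ‖z‖ ^ 2) (μ ∗ ν) :=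
    (memLp_id_conv hμ hν).integrable_norm_pow two_ne_zero
  have h_fiber (w : ℂ) := integral_norm_const_add_sq hν hν₀ w
  simp only [id] at h_fiber
  have h_sq : Integrable (fun z : ℂ => ‖z‖ ^ 2) μ := hμ.integrable_norm_pow two_ne_zero
  simp only [integral_conv h_int, h_fiber]
  rw [integral_add h_sq (integrable_const _)]
  simp

end NormSqLog

section Steinhaus

/-- The law of a uniformly distributed point of the unit circle. -/
noncomputable def steinhaus : Measure ℂ :=
  (ENNReal.ofReal (2 * π))⁻¹ • (volume.restrict (Ioc 0 (2 * π))).map (circleMap 0 1)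

instance : IsProbabilityMeasure steinhaus := by
  refine ⟨?_⟩
  rw [steinhaus, Measure.smul_apply, Measure.map_apply (measurable_circleMap 0 1) .univ]
  simpa using ENNReal.inv_mul_cancel (ENNReal.ofReal_pos.2 two_pi_pos).ne' ENNReal.ofReal_ne_top

theorem ae_norm_eq_one_steinhaus : ∀ᵐ z ∂steinhaus, ‖z‖ = 1 := by
  refine Measure.ae_smul_measure ?_ _
  rw [ae_map_iff (by fun_prop) (measurableSet_eq_fun (by fun_prop) (by fun_prop))]
  simp

theorem integral_steinhaus {E : Type*} [NormedAddCommGroup E] [NormedSpace ℝ E]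
    [SecondCountableTopology E] {F : ℂ → E} (hF : Continuous F) :
    ∫ z, F z ∂steinhaus = circleAverage F 0 1 := by
  rw [steinhaus, integral_smul_measure, integral_map (by fun_prop)
      hF.stronglyMeasurable.aestronglyMeasurable,
    circleAverage_def, intervalIntegral.integral_of_le (by positivity), ENNReal.toReal_inv,
    ENNReal.toReal_ofReal (by positivity)]

theorem memLp_id_steinhaus (p : ℝ≥0∞) : MemLp id p steinhaus :=
  .of_bound (by fun_prop) 1 (ae_norm_eq_one_steinhaus.mono fun _ h => h.le)

theorem integral_id_steinhaus : ∫ z, z ∂steinhaus = 0 := by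
  rw [integral_steinhaus (F := fun z => z) continuous_id]
  exact DiffContOnCl.circleAverage (f := fun z => z) differentiable_id.diffContOnCl

theorem norm_one_add_sq_of_norm_eq_one (c : ℂ) {u : ℂ} (hu : ‖u‖ = 1) :
    ((‖1 + c * u‖ ^ 2 : ℝ) : ℂ) = (1 + c * u) * (1 + starRingEnd ℂ c * u⁻¹) := by
  rw [Complex.inv_eq_conj hu, ← Complex.normSq_eq_norm_sq, ← Complex.mul_conj]
  simp

theorem exists_differentiableOn_re_eq_normSqLog (c : ℂ) :
    ∃ H : ℂ → ℂ, DifferentiableOn ℂ H {u | ‖c * u‖ < 1} ∧ H 0 = (‖c‖ ^ 2 : ℝ) ∧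
      ∀ u, ‖u‖ = 1 → normSqLog (1 + c * u) = 2 * (H u).re := by
  let s : Set ℂ := {u | ‖c * u‖ < 1}
  have hs : IsOpen s := isOpen_lt (by fun_prop) (by fun_prop)
  have hs₀ : (0 : ℂ) ∈ s := by simp [s]
  let L (u : ℂ) : ℂ := Complex.log (1 + c * u)
  have hL_deriv {u : ℂ} (hu : u ∈ s) : HasDerivAt L (c / (1 + c * u)) u := by
    have h_lin : HasDerivAt (fun u : ℂ => 1 + c * u) c u := by
      simpa using ((hasDerivAt_id u).const_mul c).const_add 1
    exact h_lin.clog (Complex.mem_slitPlane_of_norm_lt_one hu)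
  have hL : DifferentiableOn ℂ L s := fun u hu =>
    (hL_deriv hu).differentiableAt.differentiableWithinAt
  have h_slope := (Complex.differentiableOn_dslope (hs.mem_nhds hs₀)).2 hL
  -- On the unit circle `conj u = u⁻¹`, so `|1 + c u|² log (1 + c u)` extends holomorphically.
  refine ⟨fun u => (1 + c * u) * L u + starRingEnd ℂ c * (1 + c * u) * dslope L 0 u,
    by fun_prop, ?_, fun u hu => ?_⟩
  · simp only [dslope_same, (hL_deriv hs₀).deriv, ← Complex.normSq_eq_norm_sq, ← Complex.mul_conj]
    simp [L, mul_comm]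
  · have hu₀ : u ≠ 0 := norm_ne_zero_iff.1 (by simp [hu])
    have h_circle : (1 + c * u) * L u + starRingEnd ℂ c * (1 + c * u) * dslope L 0 u
        = (‖1 + c * u‖ ^ 2 : ℝ) * L u := by
      simp only [dslope_of_ne _ hu₀, slope_def_field, norm_one_add_sq_of_norm_eq_one c hu]
      simp [L]
      ring
    simp only [h_circle]
    rw [Complex.re_ofReal_mul, Complex.log_re, normSqLog, log_pow]
    push_cast
    ring

theorem circleAverage_normSqLog_of_norm_lt_one {c : ℂ} (hc : ‖c‖ < 1) :
    circleAverage (fun u => normSqLog (1 + c * u)) 0 1 = 2 * ‖c‖ ^ 2 := by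
  obtain ⟨H, hH, hH_zero, h_eq⟩ := exists_differentiableOn_re_eq_normSqLog c
  have h_ball : Metric.closedBall (0 : ℂ) 1 ⊆ {u | ‖c * u‖ < 1} := fun u hu => by
    have := mul_le_mul_of_nonneg_left (mem_closedBall_zero_iff.1 hu) (norm_nonneg c)
    rw [mem_ofPred_eq, norm_mul]
    linarith
  have hH_avg : circleAverage H 0 1 = H 0 :=
    DiffContOnCl.circleAverage (by rw [abs_one]; exact hH.diffContOnCl_ball h_ball)
  have hH_int : CircleIntegrable H 0 1 :=
    (hH.continuousOn.mono (Metric.sphere_subset_closedBall.trans h_ball)).circleIntegrable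
      zero_le_one
  calc circleAverage (fun u => normSqLog (1 + c * u)) 0 1
      = circleAverage (fun u => (2 : ℝ) • (H u).re) 0 1 :=
        circleAverage_congr_sphere fun u hu => h_eq u (by simpa using hu)
    _ = 2 * (circleAverage H 0 1).re := by
        rw [circleAverage_fun_smul, smul_eq_mul]
        exact congrArg (2 * ·) (Complex.reCLM.circleAverage_comp_comm hH_int)
    _ = 2 * ‖c‖ ^ 2 := by rw [hH_avg, hH_zero, Complex.ofReal_re]

theorem circleAverage_normSqLog_of_norm_le_one {c : ℂ} (hc : ‖c‖ ≤ 1) :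
    circleAverage (fun u => normSqLog (1 + c * u)) 0 1 = 2 * ‖c‖ ^ 2 := by
  have h_cont : Continuous fun c : ℂ => circleAverage (fun u => normSqLog (1 + c * u)) 0 1 := by
    have h_param := intervalIntegral.continuous_parametric_intervalIntegral_of_continuous'
      (μ := volume) (f := fun (c : ℂ) (θ : ℝ) => normSqLog (1 + c * circleMap 0 1 θ))
      (by unfold Function.uncurry; fun_prop) 0 (2 * π)
    exact h_param.const_smul (2 * π)⁻¹
  have h_eqOn : EqOn (fun c : ℂ => circleAverage (fun u => normSqLog (1 + c * u)) 0 1)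
      (fun c => 2 * ‖c‖ ^ 2) (Metric.ball 0 1) := fun c hc =>
    circleAverage_normSqLog_of_norm_lt_one (mem_ball_zero_iff.1 hc)
  refine h_eqOn.closure h_cont (by fun_prop) ?_
  rwa [closure_ball _ one_ne_zero, mem_closedBall_zero_iff]

theorem integral_norm_one_add_mul_sq_steinhaus (c : ℂ) :
    ∫ u, ‖1 + c * u‖ ^ 2 ∂steinhaus = 1 + ‖c‖ ^ 2 := by
  have h_zero : ∫ u, c * u ∂steinhaus = 0 := by
    rw [integral_const_mul, integral_id_steinhaus, mul_zero]
  rw [integral_norm_const_add_sq (Z := (c * ·)) ((memLp_id_steinhaus 2).const_mul c) h_zero,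
    integral_congr_ae (g := fun _ => ‖c‖ ^ 2)
      (ae_norm_eq_one_steinhaus.mono fun u hu => by simp [hu])]
  simp

theorem integral_normSqLog_steinhaus_of_norm_le {w ζ : ℂ} (h : ‖ζ‖ ≤ ‖w‖) :
    ∫ u, normSqLog (w + ζ * u) ∂steinhaus
      = (‖w‖ ^ 2 + ‖ζ‖ ^ 2) * log (‖w‖ ^ 2) + 2 * ‖ζ‖ ^ 2 := by
  rcases eq_or_ne w 0 with rfl | hw
  · obtain rfl : ζ = 0 := by simpa using h
    simp [normSqLog]
  have h_factor (u : ℂ) : normSqLog (w + ζ * u)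
      = ‖w‖ ^ 2 * normSqLog (1 + ζ / w * u) + ‖1 + ζ / w * u‖ ^ 2 * normSqLog w := by
    rw [← normSqLog_mul]
    congr 1
    field_simp
  have h_int {F : ℂ → ℝ} (hF : Continuous F) : Integrable F steinhaus := by
    obtain ⟨C, hC⟩ := (isCompact_sphere (0 : ℂ) 1).exists_bound_of_continuousOn hF.continuousOn
    exact .of_bound hF.stronglyMeasurable.aestronglyMeasurable C
      (ae_norm_eq_one_steinhaus.mono fun u hu => hC u (by simpa using hu))
  simp only [h_factor]
  rw [integral_add (h_int (by fun_prop)) (h_int (by fun_prop)), integral_const_mul,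
    integral_mul_const, integral_norm_one_add_mul_sq_steinhaus, integral_steinhaus (by fun_prop),
    circleAverage_normSqLog_of_norm_le_one (by rw [norm_div]; exact div_le_one_of_le₀ h (by simp)),
    norm_div, normSqLog]
  field_simp
  ring

theorem norm_add_mul_eq_norm_conj_add_conj_mul (w ζ : ℂ) {u : ℂ} (hu : ‖u‖ = 1) :
    ‖w + ζ * u‖ = ‖starRingEnd ℂ ζ + starRingEnd ℂ w * u‖ := by
  have hu' : u * starRingEnd ℂ u = 1 := by rw [Complex.mul_conj']; simp [hu]
  calc ‖w + ζ * u‖ = ‖starRingEnd ℂ (w + ζ * u) * u‖ := by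
        rw [norm_mul, hu, mul_one, RCLike.norm_conj]
    _ = ‖starRingEnd ℂ ζ + starRingEnd ℂ w * u‖ := by
      congr 1
      simp only [map_add, map_mul]
      linear_combination starRingEnd ℂ ζ * hu'

/-- The mean of `normSqLog` over a circle of squared radius `y` whose centre has squared
modulus `x`; see `integral_normSqLog_steinhaus`. -/
noncomputable def circleMeanNormSqLog (x y : ℝ) : ℝ := (x + y) * log (max x y) + 2 * min x y

theorem integral_normSqLog_steinhaus (w ζ : ℂ) :
    ∫ u, normSqLog (w + ζ * u) ∂steinhaus = circleMeanNormSqLog (‖w‖ ^ 2) (‖ζ‖ ^ 2) := by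
  rw [circleMeanNormSqLog]
  rcases le_total ‖ζ‖ ‖w‖ with h | h
  · have h_sq : ‖ζ‖ ^ 2 ≤ ‖w‖ ^ 2 := by gcongr
    rw [integral_normSqLog_steinhaus_of_norm_le h, max_eq_left h_sq, min_eq_right h_sq]
  · have h_sq : ‖w‖ ^ 2 ≤ ‖ζ‖ ^ 2 := by gcongr
    have h_swap : (fun u => normSqLog (w + ζ * u)) =ᵐ[steinhaus]
        fun u => normSqLog (starRingEnd ℂ ζ + starRingEnd ℂ w * u) :=
      ae_norm_eq_one_steinhaus.mono fun u hu =>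
        normSqLog_congr (norm_add_mul_eq_norm_conj_add_conj_mul w ζ hu)
    rw [integral_congr_ae h_swap, integral_normSqLog_steinhaus_of_norm_le (by simpa using h),
      max_eq_right h_sq, min_eq_left h_sq]
    simp only [RCLike.norm_conj]
    ring

end Steinhaus

section Comparison

theorem log_add_div_le_log_add_div {x s t : ℝ} (hx : 0 < x) (hs : x ≤ s) (hst : s ≤ t) :
    log s + x / s ≤ log t + x / t := by
  have hs₀ : 0 < s := hx.trans_le hs
  have ht₀ : 0 < t := hs₀.trans_le hst
  have h_log : 1 - s / t ≤ log t - log s := by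
    simpa [log_div ht₀.ne' hs₀.ne'] using one_sub_inv_le_log_of_pos (div_pos ht₀ hs₀)
  have h_div : x / s - x / t ≤ 1 - s / t := calc
    x / s - x / t = x / s * (1 - s / t) := by field_simp
    _ ≤ 1 * (1 - s / t) := by
      gcongr
      · exact sub_nonneg.2 ((div_le_one ht₀).2 hst)
      · exact (div_le_one hs₀).2 hs
    _ = 1 - s / t := one_mul _
  linarith

theorem hasDerivAt_add_mul_log_sub {x t : ℝ} (ht : 0 < t) :
    HasDerivAt (fun t => (x + t) * (log t - log x) - 2 * (t - x))
      (log t + x / t - (log x + 1)) t := by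
  have h := (((hasDerivAt_id t).const_add x).mul ((hasDerivAt_log ht.ne').sub_const (log x))).sub
    (((hasDerivAt_id t).sub_const x).const_mul 2)
  convert! h using 1
  simp only [id]
  field_simp
  ring

theorem convexOn_add_mul_log_sub {x : ℝ} (hx : 0 < x) :
    ConvexOn ℝ (Ici x) (fun t => (x + t) * (log t - log x) - 2 * (t - x)) := by
  have h_deriv {t : ℝ} (ht : x ≤ t) := hasDerivAt_add_mul_log_sub (x := x) (hx.trans_le ht)
  refine MonotoneOn.convexOn_of_deriv (convex_Ici x)
    (fun t ht => (h_deriv ht).continuousAt.continuousWithinAt)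
    (fun t ht => (h_deriv (interior_subset ht)).differentiableAt.differentiableWithinAt) ?_
  intro s hs t ht hst
  rw [(h_deriv (interior_subset hs)).deriv, (h_deriv (interior_subset ht)).deriv]
  gcongr ?_ - _
  exact log_add_div_le_log_add_div hx (interior_subset hs) hst

theorem monotoneOn_add_mul_log_sub {x : ℝ} (hx : 0 < x) :
    MonotoneOn (fun t => (x + t) * (log t - log x) - 2 * (t - x)) (Ici x) := by
  have h_deriv {t : ℝ} (ht : x ≤ t) := hasDerivAt_add_mul_log_sub (x := x) (hx.trans_le ht)
  refine monotoneOn_of_deriv_nonneg (convex_Ici x)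
    (fun t ht => (h_deriv ht).continuousAt.continuousWithinAt)
    (fun t ht => (h_deriv (interior_subset ht)).differentiableAt.differentiableWithinAt) ?_
  intro t ht
  have := log_add_div_le_log_add_div hx le_rfl (interior_subset ht)
  rw [(h_deriv (interior_subset ht)).deriv]
  rw [div_self hx.ne'] at this
  linarith

theorem convexOn_circleMeanNormSqLog {x : ℝ} (hx : 0 ≤ x) :
    ConvexOn ℝ (Ici 0) (circleMeanNormSqLog x) := by
  rcases hx.eq_or_lt with rfl | hx
  · refine convexOn_mul_log.congr fun y (hy : 0 ≤ y) => ?_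
    simp [circleMeanNormSqLog, hy]
  have h_range : (fun y => max x y) '' Ici 0 = Ici x := by
    ext t
    exact ⟨fun ⟨y, _, hy⟩ => hy ▸ le_max_left x y,
      fun ht => ⟨t, hx.le.trans ht, max_eq_right ht⟩⟩
  have h_max : ConvexOn ℝ (Ici 0) fun y => max x y :=
    (convexOn_const x (convex_Ici 0)).sup (convexOn_id (convex_Ici 0))
  have h_comp := ConvexOn.comp (h_range ▸ convexOn_add_mul_log_sub hx) h_max
    (h_range ▸ monotoneOn_add_mul_log_sub hx)
  have h_affine : ConvexOn ℝ (Ici 0) fun y => (log x + 2) * y + x * log x :=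
    ((LinearMap.mulLeft ℝ (log x + 2)).convexOn (convex_Ici 0)).add_const _
  refine (h_affine.add h_comp).congr fun y _ => ?_
  simp only [circleMeanNormSqLog, Pi.add_apply, Function.comp_apply]
  rcases le_total x y with h | h
  · rw [max_eq_right h, min_eq_left h]; ring
  · rw [max_eq_left h, min_eq_right h]; ring

theorem continuousOn_circleMeanNormSqLog {x : ℝ} (hx : 0 ≤ x) :
    ContinuousOn (circleMeanNormSqLog x) (Ici 0) := by
  rcases hx.eq_or_lt with rfl | hx
  · refine continuous_mul_log.continuousOn.congr fun y (hy : 0 ≤ y) => ?_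
    simp [circleMeanNormSqLog, hy]
  · have h_pos (y : ℝ) : max x y ≠ 0 := (hx.trans_le (le_max_left x y)).ne'
    unfold circleMeanNormSqLog
    exact .add (.mul (by fun_prop) (.log (by fun_prop) fun y _ => h_pos y)) (by fun_prop)

/-- The order on measures on `ℂ` defined by testing against the translates of `normSqLog`. -/
def EntropyLE (μ ν : Measure ℂ) : Prop :=
  ∀ w : ℂ, ∫ z, normSqLog (w + z) ∂μ ≤ ∫ z, normSqLog (w + z) ∂ν

theorem EntropyLE.trans {μ ν ρ : Measure ℂ} (h₁ : EntropyLE μ ν) (h₂ : EntropyLE ν ρ) :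
    EntropyLE μ ρ :=
  fun w => (h₁ w).trans (h₂ w)

theorem integral_normSqLog_add_conv {μ ν : Measure ℂ} [IsFiniteMeasure μ] [IsFiniteMeasure ν]
    (hμ : MemLp id 4 μ) (hν : MemLp id 4 ν) (w : ℂ) :
    ∫ z, normSqLog (w + z) ∂(μ ∗ ν) = ∫ x, ∫ y, normSqLog (w + (x + y)) ∂ν ∂μ :=
  integral_conv (integrable_normSqLog_add (memLp_id_conv hμ hν) w)

theorem integrable_integral_normSqLog_add {μ ν : Measure ℂ} [IsFiniteMeasure μ]
    [IsFiniteMeasure ν] (hμ : MemLp id 4 μ) (hν : MemLp id 4 ν) (w : ℂ) :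
    Integrable (fun x => ∫ y, normSqLog (w + (x + y)) ∂ν) μ :=
  (integrable_normSqLog_add ((hμ.comp_fst ν).add (hν.comp_snd μ)) w).integral_prod_left

theorem EntropyLE.conv_left {μ ν ρ : Measure ℂ} [IsFiniteMeasure μ] [IsFiniteMeasure ν]
    [IsFiniteMeasure ρ] (h : EntropyLE μ ν) (hμ : MemLp id 4 μ) (hν : MemLp id 4 ν)
    (hρ : MemLp id 4 ρ) : EntropyLE (ρ ∗ μ) (ρ ∗ ν) := by
  intro w
  rw [integral_normSqLog_add_conv hρ hμ, integral_normSqLog_add_conv hρ hν]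
  refine integral_mono (integrable_integral_normSqLog_add hρ hμ w)
    (integrable_integral_normSqLog_add hρ hν w) fun z => ?_
  simpa only [add_assoc] using h (w + z)

theorem EntropyLE.conv {μ₁ μ₂ ν₁ ν₂ : Measure ℂ} [IsFiniteMeasure μ₁] [IsFiniteMeasure μ₂]
    [IsFiniteMeasure ν₁] [IsFiniteMeasure ν₂] (h₁ : EntropyLE μ₁ ν₁) (h₂ : EntropyLE μ₂ ν₂)
    (hμ₁ : MemLp id 4 μ₁) (hμ₂ : MemLp id 4 μ₂) (hν₁ : MemLp id 4 ν₁) (hν₂ : MemLp id 4 ν₂) :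
    EntropyLE (μ₁ ∗ μ₂) (ν₁ ∗ ν₂) := by
  have h := h₁.conv_left hμ₁ hν₁ hν₂
  rw [Measure.conv_comm, Measure.conv_comm ν₂] at h
  exact (h₂.conv_left hμ₂ hν₂ hμ₁).trans h

/- The mean value of `normSqLog` over a circle is a convex function of the squared radius, so
Jensen's inequality shows that spreading out the radius increases it. -/
theorem entropyLE_of_smulInvariantMeasure {μ : Measure ℂ} [IsProbabilityMeasure μ]
    [SMulInvariantMeasure Circle ℂ μ] (hμ : MemLp id 4 μ) {a : ℂ} (ha : ‖a‖ ^ 2 = ∫ z, ‖z‖ ^ 2 ∂μ) :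
    EntropyLE (steinhaus.map (a * ·)) μ := by
  intro w
  have h_prod : MemLp (fun p : ℂ × ℂ => p.1 * p.2) 4 (μ.prod steinhaus) := by
    refine (hμ.comp_fst steinhaus).mono (by fun_prop) ?_
    filter_upwards [Measure.quasiMeasurePreserving_snd.ae ae_norm_eq_one_steinhaus] with p hp
    simp [hp]
  have h_int := integrable_normSqLog_add h_prod w
  have h_fiber (z : ℂ) := integral_normSqLog_steinhaus w z
  have h_sq : Integrable (fun z : ℂ => ‖z‖ ^ 2) μ :=
    (hμ.mono_exponent (by norm_num : (2 : ℝ≥0∞) ≤ 4)).integrable_norm_pow two_ne_zero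
  calc ∫ z, normSqLog (w + z) ∂(steinhaus.map (a * ·))
      = circleMeanNormSqLog (‖w‖ ^ 2) (∫ z, ‖z‖ ^ 2 ∂μ) := by
        rw [integral_map (by fun_prop) (by fun_prop), h_fiber, ha]
    _ ≤ ∫ z, circleMeanNormSqLog (‖w‖ ^ 2) (‖z‖ ^ 2) ∂μ :=
        (convexOn_circleMeanNormSqLog (by positivity)).map_integral_le
          (continuousOn_circleMeanNormSqLog (by positivity)) isClosed_Ici
          (.of_forall fun z => by simp) h_sq
          (by have := h_int.integral_prod_left; simp only [h_fiber] at this; exact this)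
    _ = ∫ u, ∫ z, normSqLog (w + z * u) ∂μ ∂steinhaus := by
        simp only [← h_fiber]
        exact integral_integral_swap h_int
    _ = ∫ _u, ∫ z, normSqLog (w + z) ∂μ ∂steinhaus := by
        refine integral_congr_ae (ae_norm_eq_one_steinhaus.mono fun u hu => ?_)
        obtain ⟨c, rfl⟩ : ∃ c : Circle, (c : ℂ) = u := ⟨⟨u, mem_sphere_zero_iff_norm.2 hu⟩, rfl⟩
        simpa only [Circle.smul_def, smul_eq_mul, mul_comm] using
          integral_smul_eq_self (μ := μ) (fun z => normSqLog (w + z)) (g := c)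
    _ = ∫ z, normSqLog (w + z) ∂μ := by simp

end Comparison

section ComplexGaussian

/-- The standard circularly symmetric Gaussian measure on `ℂ`, normalized so that the mean of
`‖z‖ ^ 2` is `1`. -/
noncomputable def stdComplexGaussian : Measure ℂ :=
  volume.withDensity fun z => ENNReal.ofReal (π⁻¹ * exp (-‖z‖ ^ 2))

theorem integral_stdComplexGaussian {E : Type*} [NormedAddCommGroup E] [NormedSpace ℝ E]
    (F : ℂ → E) : ∫ z, F z ∂stdComplexGaussian = ∫ z, (π⁻¹ * exp (-‖z‖ ^ 2)) • F z := by
  rw [stdComplexGaussian, integral_withDensity_eq_integral_toReal_smul (by fun_prop) (by simp)]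
  simp only [ENNReal.toReal_ofReal (show 0 ≤ π⁻¹ * exp (-‖_‖ ^ 2) by positivity)]

theorem integral_norm_rpow_stdComplexGaussian {q : ℝ} (hq : 0 ≤ q) :
    ∫ z, ‖z‖ ^ q ∂stdComplexGaussian = Gamma (q / 2 + 1) := by
  have h_weight (z : ℂ) : (π⁻¹ * exp (-‖z‖ ^ 2)) • ‖z‖ ^ q
      = π⁻¹ * (‖z‖ ^ q * exp (-‖z‖ ^ (2 : ℝ))) := by
    rw [smul_eq_mul, rpow_two]; ring
  simp only [integral_stdComplexGaussian, h_weight]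
  rw [integral_const_mul, Complex.integral_rpow_mul_exp_neg_rpow one_le_two (by linarith),
    show (q + 2) / 2 = q / 2 + 1 by ring]
  field_simp

theorem integrable_norm_rpow_stdComplexGaussian {q : ℝ} (hq : 0 ≤ q) :
    Integrable (fun z : ℂ => ‖z‖ ^ q) stdComplexGaussian :=
  .of_integral_ne_zero <| by
    rw [integral_norm_rpow_stdComplexGaussian hq]
    exact (Gamma_pos_of_pos (by positivity)).ne'

instance : IsProbabilityMeasure stdComplexGaussian := by
  have h_int := integrable_norm_rpow_stdComplexGaussian le_rfl
  have h_mass := integral_norm_rpow_stdComplexGaussian le_rfl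
  simp only [rpow_zero] at h_int h_mass
  have : IsFiniteMeasure stdComplexGaussian :=
    (integrable_const_iff.1 h_int).resolve_left one_ne_zero
  rw [isProbabilityMeasure_iff_real]
  simpa using h_mass

theorem memLp_id_stdComplexGaussian {p : ℝ≥0∞} (hp₀ : p ≠ 0) (hp : p ≠ ∞) :
    MemLp id p stdComplexGaussian :=
  (integrable_norm_rpow_iff (by fun_prop) hp₀ hp).1
    (integrable_norm_rpow_stdComplexGaussian ENNReal.toReal_nonneg)

theorem integral_norm_sq_stdComplexGaussian : ∫ z, ‖z‖ ^ 2 ∂stdComplexGaussian = 1 := by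
  simpa [one_add_one_eq_two] using integral_norm_rpow_stdComplexGaussian zero_le_two

theorem charFun_map_linearIsometryEquiv {E : Type*} [NormedAddCommGroup E] [InnerProductSpace ℝ E]
    [MeasurableSpace E] [BorelSpace E] (μ : Measure E) (e : E ≃ₗᵢ[ℝ] E) (t : E) :
    charFun (μ.map e) t = charFun μ (e.symm t) := by
  rw [charFun_apply, charFun_apply]
  refine (e.toHomeomorph.measurableEmbedding.integral_map _).trans ?_
  simp [e.inner_map_eq_flip]

theorem charFun_stdComplexGaussian (t : ℂ) :
    charFun stdComplexGaussian t = Complex.exp (-(‖t‖ : ℂ) ^ 2 / 4) := by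
  have h_weight (z : ℂ) : (π⁻¹ * exp (-‖z‖ ^ 2)) • Complex.exp ((inner ℝ z t : ℝ) * Complex.I)
      = (π : ℂ)⁻¹ * Complex.exp (-1 * (‖z‖ : ℂ) ^ 2 + Complex.I * (inner ℝ t z : ℝ)) := by
    rw [Complex.exp_add, real_inner_comm, Complex.real_smul]
    push_cast
    rw [mul_comm Complex.I, neg_one_mul, mul_assoc]
  simp only [charFun_apply, integral_stdComplexGaussian, h_weight]
  rw [integral_const_mul,
    GaussianFourier.integral_cexp_neg_mul_sq_norm_add (V := ℂ) (b := 1) (by simp) Complex.I t]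
  simp [Complex.finrank_real_complex, pi_ne_zero]

theorem normSqLog_le {h : ℝ} (hh : 0 < h) (z : ℂ) :
    normSqLog z ≤ h⁻¹ * (‖z‖ ^ (2 + 2 * h) - ‖z‖ ^ (2 : ℝ)) := by
  rcases eq_or_ne z 0 with rfl | hz
  · simp [normSqLog, zero_rpow (show 2 + 2 * h ≠ 0 by positivity)]
  have hz : 0 < ‖z‖ := norm_pos_iff.2 hz
  have h_log : log (‖z‖ ^ 2) ≤ h⁻¹ * ((‖z‖ ^ 2) ^ h - 1) := by
    rw [← div_eq_inv_mul, le_div_iff₀ hh, rpow_def_of_pos (by positivity)]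
    linarith [add_one_le_exp (log (‖z‖ ^ 2) * h)]
  calc normSqLog z ≤ ‖z‖ ^ 2 * (h⁻¹ * ((‖z‖ ^ 2) ^ h - 1)) := by unfold normSqLog; gcongr
    _ = h⁻¹ * (‖z‖ ^ (2 + 2 * h) - ‖z‖ ^ (2 : ℝ)) := by
      rw [rpow_add hz, rpow_mul hz.le, rpow_two]; ring

/- The moments of order `2 + 2h` are `Γ(2 + h)`, so the difference quotients bounding `normSqLog`
average to those of `Γ` at `2`. -/
theorem integral_normSqLog_stdComplexGaussian_le :
    ∫ z, normSqLog z ∂stdComplexGaussian ≤ 1 - eulerMascheroniConstant := by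
  have h_deriv : HasDerivAt Gamma (1 - eulerMascheroniConstant) 2 := by
    have := hasDerivAt_Gamma_nat 1
    norm_num at this
    rwa [neg_add_eq_sub] at this
  refine ge_of_tendsto h_deriv.tendsto_slope_zero_right ?_
  filter_upwards [self_mem_nhdsWithin] with h hh
  have hh : 0 < h := hh
  have h_int := integrable_norm_rpow_stdComplexGaussian (show 0 ≤ 2 + 2 * h by positivity)
  have h_int₂ := integrable_norm_rpow_stdComplexGaussian zero_le_two
  have h_log := integrable_normSqLog_add (memLp_id_stdComplexGaussian four_ne_zero (by simp)) 0
  simp only [zero_add, id] at h_log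
  calc ∫ z, normSqLog z ∂stdComplexGaussian
      ≤ ∫ z, h⁻¹ * (‖z‖ ^ (2 + 2 * h) - ‖z‖ ^ (2 : ℝ)) ∂stdComplexGaussian :=
        integral_mono h_log ((h_int.sub h_int₂).const_mul _) (normSqLog_le hh)
    _ = h⁻¹ * (Gamma ((2 + 2 * h) / 2 + 1) - Gamma (2 / 2 + 1)) := by
        rw [integral_const_mul, integral_sub h_int h_int₂,
          integral_norm_rpow_stdComplexGaussian (by positivity),
          integral_norm_rpow_stdComplexGaussian zero_le_two]
    _ = h⁻¹ • (Gamma (2 + h) - Gamma 2) := by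
        rw [smul_eq_mul]; ring_nf

/-- The circularly symmetric Gaussian measure on `ℂ` for which the mean of `‖z‖ ^ 2` is `v`. -/
noncomputable def complexGaussian (v : ℝ≥0) : Measure ℂ :=
  stdComplexGaussian.map (√(v : ℝ) • ·)

variable (v : ℝ≥0)

instance : IsProbabilityMeasure (complexGaussian v) :=
  Measure.isProbabilityMeasure_map (by fun_prop)

theorem memLp_id_complexGaussian {p : ℝ≥0∞} (hp₀ : p ≠ 0) (hp : p ≠ ∞) :
    MemLp id p (complexGaussian v) := by
  rw [complexGaussian, memLp_map_measure_iff (by fun_prop) (by fun_prop)]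
  exact (memLp_id_stdComplexGaussian hp₀ hp).const_smul √(v : ℝ)

theorem integral_norm_sq_complexGaussian : ∫ z, ‖z‖ ^ 2 ∂complexGaussian v = v := by
  rw [complexGaussian, integral_map (by fun_prop) (by fun_prop)]
  simp only [norm_smul, mul_pow, integral_const_mul, integral_norm_sq_stdComplexGaussian]
  simp

theorem charFun_complexGaussian (t : ℂ) :
    charFun (complexGaussian v) t = Complex.exp (-(v * (‖t‖ : ℂ) ^ 2 / 4)) := by
  rw [complexGaussian, charFun_map_smul, charFun_stdComplexGaussian, norm_smul,
    ← Complex.ofReal_pow, mul_pow]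
  simp [neg_div]

theorem complexGaussian_conv (u : ℝ≥0) :
    complexGaussian u ∗ complexGaussian v = complexGaussian (u + v) := by
  refine Measure.ext_of_charFun (funext fun t => ?_)
  simp only [charFun_conv, charFun_complexGaussian, ← Complex.exp_add]
  push_cast
  ring_nf

instance : SMulInvariantMeasure Circle ℂ (complexGaussian v) := by
  refine ((smulInvariantMeasure_tfae Circle (complexGaussian v)).out 0 5).2 fun c => ?_
  refine Measure.ext_of_charFun (funext fun t => ?_)
  have h := charFun_map_linearIsometryEquiv (complexGaussian v) (rotation c) t
  rwa [charFun_complexGaussian, LinearIsometryEquiv.norm_map, ← charFun_complexGaussian] at h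

theorem integral_normSqLog_complexGaussian_le :
    ∫ z, normSqLog z ∂complexGaussian v ≤ v * log v + (1 - eulerMascheroniConstant) * v := by
  have h_log := integrable_normSqLog_add (memLp_id_stdComplexGaussian four_ne_zero (by simp)) 0
  have h_sq : Integrable (fun z : ℂ => ‖z‖ ^ 2) stdComplexGaussian :=
    (memLp_id_stdComplexGaussian two_ne_zero (by simp)).integrable_norm_pow two_ne_zero
  simp only [zero_add, id] at h_log
  rw [complexGaussian, integral_map (by fun_prop) (by fun_prop)]
  simp only [Complex.real_smul, normSqLog_mul]
  rw [integral_add (h_log.const_mul _) (h_sq.mul_const _), integral_const_mul, integral_mul_const,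
    integral_norm_sq_stdComplexGaussian]
  have := mul_le_mul_of_nonneg_left integral_normSqLog_stdComplexGaussian_le v.coe_nonneg
  rw [normSqLog, Complex.norm_real, norm_of_nonneg (by positivity), sq_sqrt v.coe_nonneg]
  linarith

end ComplexGaussian

section Khinchine

variable {Ω : Type*} [MeasurableSpace Ω] {P : Measure Ω}

theorem integrable_rpow_of_le_one [IsFiniteMeasure P] {f : Ω → ℝ} (hf₀ : 0 ≤ f)
    (hf : Integrable f P) {p : ℝ} (hp₀ : 0 ≤ p) (hp₁ : p ≤ 1) :
    Integrable (fun ω => f ω ^ p) P := by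
  refine (hf.add (integrable_const 1)).mono'
    (hf.1.aemeasurable.pow_const p).aestronglyMeasurable (.of_forall fun ω => ?_)
  have hω : 0 ≤ f ω := hf₀ ω
  have := rpow_one_add_le_one_add_mul_self (s := f ω - 1) (by linarith) hp₀ hp₁
  rw [norm_of_nonneg (by positivity), Pi.add_apply]
  rw [add_sub_cancel] at this
  nlinarith

theorem exp_neg_mul_le_rpow_one_sub {δ x : ℝ} (hδ : δ < 1) (hx : 0 ≤ x) (d : ℝ) :
    exp (-δ * d) * (x * (1 + δ * d) - δ * (x * log x)) ≤ x ^ (1 - δ) := by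
  rcases hx.eq_or_lt with rfl | hx
  · simp [zero_rpow (sub_pos.2 hδ).ne']
  have h_tangent := add_one_le_exp (-δ * (log x - d))
  calc exp (-δ * d) * (x * (1 + δ * d) - δ * (x * log x))
      = x * (exp (-δ * d) * (-δ * (log x - d) + 1)) := by ring
    _ ≤ x * (exp (-δ * d) * exp (-δ * (log x - d))) := by gcongr
    _ = x ^ (1 - δ) := by
      rw [← exp_add, rpow_def_of_pos hx]
      nth_rw 1 [← exp_log hx]
      rw [← exp_add]
      ring_nf

/- Integrate the tangent line of `exp` at the point where the entropy bound becomes an equality. -/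
theorem integral_rpow_one_sub_le_exp_mul_integral [IsFiniteMeasure P] {f : Ω → ℝ} (hf₀ : 0 ≤ f)
    (hf : Integrable f P) (hf_log : Integrable (fun ω => f ω * log (f ω)) P) {c δ : ℝ}
    (h_entropy : ∫ ω, f ω * log (f ω) ∂P ≤ (∫ ω, f ω ∂P) * log (∫ ω, f ω ∂P) + c * ∫ ω, f ω ∂P)
    (hδ₀ : 0 ≤ δ) (hδ₁ : δ < 1) :
    (∫ ω, f ω ∂P) ^ (1 - δ) ≤ exp (δ * c) * ∫ ω, f ω ^ (1 - δ) ∂P := by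
  set A := ∫ ω, f ω ∂P
  have hA₀ : 0 ≤ A := integral_nonneg hf₀
  rcases hA₀.eq_or_lt with hA₀ | hA₀
  · rw [← hA₀, zero_rpow (sub_pos.2 hδ₁).ne']
    exact mul_nonneg (exp_pos _).le (integral_nonneg fun ω => rpow_nonneg (hf₀ ω) _)
  let d := log A + c
  have h_tangent : exp (-δ * d) * A ≤ ∫ ω, f ω ^ (1 - δ) ∂P := calc
    exp (-δ * d) * A
      ≤ exp (-δ * d) * (A * (1 + δ * d) - δ * ∫ ω, f ω * log (f ω) ∂P) := by
        have := mul_le_mul_of_nonneg_left h_entropy hδ₀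
        gcongr
        simp only [d]
        linarith
    _ = ∫ ω, exp (-δ * d) * (f ω * (1 + δ * d) - δ * (f ω * log (f ω))) ∂P := by
        rw [integral_const_mul, integral_sub (hf.mul_const _) (hf_log.const_mul _),
          integral_mul_const, integral_const_mul]
    _ ≤ ∫ ω, f ω ^ (1 - δ) ∂P :=
        integral_mono (((hf.mul_const _).sub (hf_log.const_mul _)).const_mul _)
          (integrable_rpow_of_le_one hf₀ hf (by linarith) (by linarith))
          fun ω => exp_neg_mul_le_rpow_one_sub hδ₁ (hf₀ ω) d
  calc A ^ (1 - δ) = exp (δ * c) * (exp (-δ * d) * A) := by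
        nth_rw 2 [← exp_log hA₀]
        rw [rpow_def_of_pos hA₀, ← exp_add, ← exp_add]
        simp only [d]
        ring_nf
    _ ≤ exp (δ * c) * ∫ ω, f ω ^ (1 - δ) ∂P := by gcongr

variable {ι : Type*} {X : ι → Ω → ℂ}

theorem memLp_sum_mul_steinhaus (hX : ∀ k, HasLaw (X k) steinhaus P) (s : Finset ι) (a : ι → ℂ)
    (p : ℝ≥0∞) : MemLp (fun ω => ∑ k ∈ s, a k * X k ω) p P := by
  refine memLp_finsetSum s fun k _ => MemLp.const_mul ?_ (a k)
  have h := memLp_id_steinhaus p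
  rw [← (hX k).map_eq] at h
  exact (memLp_map_measure_iff (by fun_prop) (hX k).aemeasurable).1 h

theorem map_sum_insert_mul_steinhaus [DecidableEq ι] [IsProbabilityMeasure P]
    (hX : ∀ k, HasLaw (X k) steinhaus P) (h_indep : iIndepFun X P) {s : Finset ι}
    {k : ι} (hk : k ∉ s) (a : ι → ℂ) :
    P.map (fun ω => ∑ j ∈ insert k s, a j * X j ω)
      = steinhaus.map (a k * ·) ∗ P.map (fun ω => ∑ j ∈ s, a j * X j ω) := by
  have h_meas (j : ι) : AEMeasurable (fun ω => a j * X j ω) P := (hX j).aemeasurable.const_mul _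
  have h_indep' : iIndepFun (fun j ω => a j * X j ω) P :=
    h_indep.comp (fun j z => a j * z) fun j => by fun_prop
  have h_term : P.map (fun ω => a k * X k ω) = steinhaus.map (a k * ·) := by
    rw [← (hX k).map_eq, AEMeasurable.map_map_of_aemeasurable (by fun_prop) (hX k).aemeasurable]
    rfl
  have h_conv := (h_indep'.indepFun_finsetSum_of_notMem₀ h_meas hk).symm.map_add_eq_map_conv_map₀
    (h_meas k) (Finset.aemeasurable_sum s fun j _ => h_meas j)
  simp only [h_term, Finset.sum_fn] at h_conv
  simp only [Finset.sum_insert hk]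
  exact h_conv

theorem memLp_id_map_mul_steinhaus (a : ℂ) (p : ℝ≥0∞) : MemLp id p (steinhaus.map (a * ·)) :=
  (memLp_map_measure_iff (by fun_prop) (by fun_prop)).2 ((memLp_id_steinhaus p).const_mul a)

theorem memLp_id_map_sum_mul_steinhaus (hX : ∀ k, HasLaw (X k) steinhaus P) (s : Finset ι)
    (a : ι → ℂ) (p : ℝ≥0∞) : MemLp id p (P.map fun ω => ∑ k ∈ s, a k * X k ω) :=
  have h := memLp_sum_mul_steinhaus hX s a p
  (memLp_map_measure_iff (by fun_prop) h.aemeasurable).2 h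

theorem integral_norm_sq_map_mul_steinhaus (a : ℂ) :
    ∫ z, ‖z‖ ^ 2 ∂(steinhaus.map (a * ·)) = ‖a‖ ^ 2 := by
  rw [integral_map (by fun_prop) (by fun_prop),
    integral_congr_ae (g := fun _ => ‖a‖ ^ 2)
      (ae_norm_eq_one_steinhaus.mono fun u hu => by simp [hu])]
  simp

theorem integral_id_map_mul_steinhaus (a : ℂ) : ∫ z, z ∂(steinhaus.map (a * ·)) = 0 := by
  rw [integral_map (by fun_prop) (by fun_prop), integral_const_mul, integral_id_steinhaus, mul_zero]

theorem entropyLE_map_sum_mul_steinhaus [IsProbabilityMeasure P]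
    (hX : ∀ k, HasLaw (X k) steinhaus P) (h_indep : iIndepFun X P) (s : Finset ι) (a : ι → ℂ) :
    EntropyLE (P.map fun ω => ∑ k ∈ s, a k * X k ω) (complexGaussian (∑ k ∈ s, ‖a k‖₊ ^ 2)) := by
  classical
  induction s using Finset.induction_on with
  | empty => intro w; simp [complexGaussian]
  | insert k s hk ih =>
    have := Measure.isProbabilityMeasure_map (μ := steinhaus) (f := (a k * ·)) (by fun_prop)
    have := Measure.isProbabilityMeasure_map (μ := P)
      (memLp_sum_mul_steinhaus hX s a 4).aemeasurable
    rw [map_sum_insert_mul_steinhaus hX h_indep hk, Finset.sum_insert hk, ← complexGaussian_conv]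
    exact (entropyLE_of_smulInvariantMeasure (memLp_id_complexGaussian _ four_ne_zero (by simp))
      (by simp [integral_norm_sq_complexGaussian])).conv ih (memLp_id_map_mul_steinhaus _ 4)
      (memLp_id_map_sum_mul_steinhaus hX s a 4) (memLp_id_complexGaussian _ four_ne_zero (by simp))
      (memLp_id_complexGaussian _ four_ne_zero (by simp))

theorem integral_norm_sum_mul_steinhaus_sq [IsProbabilityMeasure P]
    (hX : ∀ k, HasLaw (X k) steinhaus P) (h_indep : iIndepFun X P) (s : Finset ι) (a : ι → ℂ) :
    ∫ ω, ‖∑ k ∈ s, a k * X k ω‖ ^ 2 ∂P = ∑ k ∈ s, ‖a k‖ ^ 2 := by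
  classical
  have h_map (s : Finset ι) : ∫ z, ‖z‖ ^ 2 ∂(P.map fun ω => ∑ k ∈ s, a k * X k ω)
      = ∫ ω, ‖∑ k ∈ s, a k * X k ω‖ ^ 2 ∂P :=
    integral_map (memLp_sum_mul_steinhaus hX s a 2).aemeasurable (by fun_prop)
  induction s using Finset.induction_on with
  | empty => simp
  | insert k s hk ih =>
    have := Measure.isProbabilityMeasure_map (μ := steinhaus) (f := (a k * ·)) (by fun_prop)
    have := Measure.isProbabilityMeasure_map (μ := P)
      (memLp_sum_mul_steinhaus hX s a 2).aemeasurable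
    rw [← h_map, map_sum_insert_mul_steinhaus hX h_indep hk, Measure.conv_comm,
      integral_norm_sq_conv (memLp_id_map_sum_mul_steinhaus hX s a 2)
        (memLp_id_map_mul_steinhaus _ 2) (integral_id_map_mul_steinhaus _), h_map, ih,
      integral_norm_sq_map_mul_steinhaus, Finset.sum_insert hk, add_comm]

theorem khinchine_steinhaus (hX : ∀ k, HasLaw (X k) steinhaus P) (h_indep : iIndepFun X P)
    (s : Finset ι) (a : ι → ℂ) {δ : ℝ} (hδ₀ : 0 ≤ δ) (hδ₁ : δ < 1) :
    (∑ k ∈ s, ‖a k‖ ^ 2) ^ (1 - δ) ≤ exp (δ * (1 - eulerMascheroniConstant))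
      * ∫ ω, (‖∑ k ∈ s, a k * X k ω‖ ^ 2) ^ (1 - δ) ∂P := by
  have := h_indep.isProbabilityMeasure
  have h_sum := memLp_sum_mul_steinhaus hX s a
  have h_sq := integral_norm_sum_mul_steinhaus_sq hX h_indep s a
  have h_entropy := entropyLE_map_sum_mul_steinhaus hX h_indep s a 0
  have h_gauss := integral_normSqLog_complexGaussian_le (∑ k ∈ s, ‖a k‖₊ ^ 2)
  rw [integral_map (h_sum 2).aemeasurable (by fun_prop)] at h_entropy
  have h_int := integrable_normSqLog_add (h_sum 4) 0
  simp only [zero_add] at h_entropy h_int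
  rw [← h_sq]
  refine integral_rpow_one_sub_le_exp_mul_integral (fun ω => by positivity)
    ((h_sum 2).integrable_norm_pow two_ne_zero) h_int ?_ hδ₀ hδ₁
  rw [h_sq]
  refine (h_entropy.trans h_gauss).trans_eq ?_
  push_cast
  rfl

end Khinchine

section BohnenblustHille

variable {ι : Type*} {n : ℕ}

/-- `M` is a bound for the multilinear form `U` on the product of closed unit polydiscs. -/
def IsPolydiscBound {𝕜 : Type*} [RCLike 𝕜] [Fintype ι]
    (U : MultilinearMap 𝕜 (fun _ : Fin n => ι → 𝕜) 𝕜) (M : ℝ) : Prop :=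
  ∀ z : Fin n → ι → 𝕜, (∀ k, ‖z k‖ ≤ 1) → ‖U z‖ ≤ M

theorem IsPolydiscBound.curryMid {𝕜 : Type*} [RCLike 𝕜] [Fintype ι]
    {U : MultilinearMap 𝕜 (fun _ : Fin (n + 1) => ι → 𝕜) 𝕜} {M : ℝ}
    (hU : IsPolydiscBound U M) (k : Fin (n + 1)) {u : ι → 𝕜} (hu : ‖u‖ ≤ 1) :
    IsPolydiscBound (U.curryMid k u) M := fun z hz =>
  hU (k.insertNth u z) (k.forall_iff_succAbove.2 ⟨by simpa using hu, fun l => by simpa using hz l⟩)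

variable [DecidableEq ι]

/-- The coefficients of a multilinear form, that is, its values at tuples of basis vectors. -/
def basisCoeff {R : Type*} [CommSemiring R] (U : MultilinearMap R (fun _ : Fin n => ι → R) R)
    (i : Fin n → ι) : R :=
  U fun k => Pi.single (i k) 1

variable [Fintype ι]

theorem apply_eq_sum_smul_apply_single {R M : Type*} [Semiring R] [AddCommMonoid M] [Module R M]
    (f : (ι → R) →ₗ[R] M) (z : ι → R) : f z = ∑ x, z x • f (Pi.single x 1) := by
  conv_lhs => rw [← Finset.univ_sum_single z, map_sum]
  refine Finset.sum_congr rfl fun x _ => ?_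
  rw [← map_smul, ← Pi.single_smul', smul_eq_mul, mul_one]

theorem basisCoeff_curryMid {R : Type*} [CommSemiring R]
    (U : MultilinearMap R (fun _ : Fin (n + 1) => ι → R) R) (k : Fin (n + 1))
    (u : ι → R) (j : Fin n → ι) :
    basisCoeff (U.curryMid k u) j = ∑ x, basisCoeff U (k.insertNth x j) * u x := by
  have h_insert (x : ι) : (k.insertNth (Pi.single x 1) fun l => Pi.single (j l) 1 :
      Fin (n + 1) → ι → R) = fun l => Pi.single (k.insertNth (α := fun _ => ι) x j l) 1 :=
    funext <| k.forall_iff_succAbove.2 ⟨by simp, by simp⟩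
  rw [basisCoeff, apply_eq_sum_smul_apply_single (U.curryMid k) u]
  simp only [sum_apply, smul_apply, MultilinearMap.curryMid_apply_apply, h_insert, basisCoeff,
    smul_eq_mul, mul_comm]

theorem sum_norm_apply_single_le {𝕜 : Type*} [RCLike 𝕜] (f : (ι → 𝕜) →ₗ[𝕜] 𝕜) {M : ℝ}
    (hf : ∀ z, ‖z‖ ≤ 1 → ‖f z‖ ≤ M) : ∑ x, ‖f (Pi.single x 1)‖ ≤ M := by
  choose u hu hu_mul using fun x => RCLike.exists_norm_eq_mul_self (f (Pi.single x 1))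
  have h_apply : f u = (∑ x, ‖f (Pi.single x 1)‖ : ℝ) := by
    rw [apply_eq_sum_smul_apply_single f u]
    simp [hu_mul]
  calc ∑ x, ‖f (Pi.single x 1)‖ = ‖f u‖ := by
        rw [h_apply, RCLike.norm_ofReal, abs_of_nonneg (by positivity)]
    _ ≤ M := hf u ((pi_norm_le_iff_of_nonneg zero_le_one).2 fun x => (hu x).le)

theorem IsPolydiscBound.sum_norm_basisCoeff_le {𝕜 : Type*} [RCLike 𝕜]
    {U : MultilinearMap 𝕜 (fun _ : Fin 1 => ι → 𝕜) 𝕜} {M : ℝ}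
    (hU : IsPolydiscBound U M) : ∑ i, ‖basisCoeff U i‖ ≤ M := by
  let f : (ι → 𝕜) →ₗ[𝕜] 𝕜 := (MultilinearMap.ofSubsingleton 𝕜 (ι → 𝕜) 𝕜 (0 : Fin 1)).symm U
  calc ∑ i, ‖basisCoeff U i‖ = ∑ x, ‖f (Pi.single x 1)‖ :=
        Fintype.sum_equiv (Equiv.funUnique (Fin 1) ι) _ _ fun i => by
          simp [f, basisCoeff, Subsingleton.elim _ (0 : Fin 1)]
    _ ≤ M := sum_norm_apply_single_le f fun z hz => hU _ fun _ => hz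

theorem sum_rpow_sum_norm_basisCoeff_insertNth_sq_le (hn : 0 < n)
    {U : MultilinearMap ℂ (fun _ : Fin (n + 1) => ι → ℂ) ℂ} {M B : ℝ} (hU : IsPolydiscBound U M)
    (hB : ∀ V : MultilinearMap ℂ (fun _ : Fin n => ι → ℂ) ℂ, IsPolydiscBound V M →
      ∑ i, (‖basisCoeff V i‖ ^ 2) ^ (n / (n + 1) : ℝ) ≤ B) (k : Fin (n + 1)) :
    ∑ j, (∑ x, ‖basisCoeff U (k.insertNth x j)‖ ^ 2) ^ (n / (n + 1) : ℝ)
      ≤ exp ((1 - eulerMascheroniConstant) / (n + 1)) * B := by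
  let P : Measure (ι → ℂ) := Measure.pi fun _ => steinhaus
  let Z (j : Fin n → ι) (u : ι → ℂ) : ℂ := ∑ x, basisCoeff U (k.insertNth x j) * u x
  have h_law (x : ι) : HasLaw (fun u : ι → ℂ => u x) steinhaus P :=
    (measurePreserving_eval (fun _ : ι => steinhaus) x).hasLaw
  have h_indep : iIndepFun (fun (x : ι) (u : ι → ℂ) => u x) P :=
    iIndepFun_pi fun _ => aemeasurable_id
  have h_exponent : (n / (n + 1) : ℝ) = 1 - 1 / (n + 1) := by field_simp; ring
  have h_lt_one : 1 / (n + 1 : ℝ) < 1 := (div_lt_one (by positivity)).2 (by simpa using hn)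
  have h_int (j : Fin n → ι) : Integrable (fun u => (‖Z j u‖ ^ 2) ^ (n / (n + 1) : ℝ)) P :=
    integrable_rpow_of_le_one (fun u => by positivity)
      ((memLp_sum_mul_steinhaus h_law _ _ 2).integrable_norm_pow two_ne_zero)
      (by positivity) (h_exponent.trans_le (by simpa using by positivity))
  have h_norm : ∀ᵐ u ∂P, ‖u‖ ≤ 1 := by
    have h_eval (x : ι) : ∀ᵐ u ∂P, ‖u x‖ = 1 :=
      (h_law x).ae_iff (p := fun z => ‖z‖ = 1) (by measurability) |>.2 ae_norm_eq_one_steinhaus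
    filter_upwards [ae_all_iff.2 h_eval] with u hu
    exact (pi_norm_le_iff_of_nonneg zero_le_one).2 fun x => (hu x).le
  have h_slice : ∀ᵐ u ∂P, ∑ j, (‖Z j u‖ ^ 2) ^ (n / (n + 1) : ℝ) ≤ B := by
    filter_upwards [h_norm] with u hu
    simpa only [Z, ← basisCoeff_curryMid] using hB _ (hU.curryMid k hu)
  calc ∑ j, (∑ x, ‖basisCoeff U (k.insertNth x j)‖ ^ 2) ^ (n / (n + 1) : ℝ)
      ≤ ∑ j, exp ((1 - eulerMascheroniConstant) / (n + 1))
          * ∫ u, (‖Z j u‖ ^ 2) ^ (n / (n + 1) : ℝ) ∂P := by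
        gcongr with j
        rw [h_exponent, ← one_div_mul_eq_div (n + 1 : ℝ) (1 - eulerMascheroniConstant)]
        exact khinchine_steinhaus h_law h_indep _ _ (by positivity) h_lt_one
    _ = exp ((1 - eulerMascheroniConstant) / (n + 1))
          * ∫ u, ∑ j, (‖Z j u‖ ^ 2) ^ (n / (n + 1) : ℝ) ∂P := by
        rw [integral_finsetSum _ fun j _ => h_int j, Finset.mul_sum]
    _ ≤ exp ((1 - eulerMascheroniConstant) / (n + 1)) * B := by
        gcongr
        exact (integral_mono_ae (integrable_finsetSum _ fun j _ => h_int j)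
          (integrable_const B) h_slice).trans_eq (by simp)

theorem sum_rpow_norm_basisCoeff_sq_le_rpow (hn : 0 < n)
    {U : MultilinearMap ℂ (fun _ : Fin (n + 1) => ι → ℂ) ℂ} {M B : ℝ} (hU : IsPolydiscBound U M)
    (hB : ∀ V : MultilinearMap ℂ (fun _ : Fin n => ι → ℂ) ℂ, IsPolydiscBound V M →
      ∑ i, (‖basisCoeff V i‖ ^ 2) ^ (n / (n + 1) : ℝ) ≤ B) :
    ∑ i, (‖basisCoeff U i‖ ^ 2) ^ ((n + 1) / (n + 2) : ℝ)
      ≤ (exp ((1 - eulerMascheroniConstant) / (n + 1)) * B)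
        ^ ((n + 1) ^ 2 / (n * (n + 2)) : ℝ) := by
  have h_slice := sum_rpow_sum_norm_basisCoeff_insertNth_sq_le hn hU hB
  obtain ⟨T, hT⟩ : ∃ T : ℝ≥0, exp ((1 - eulerMascheroniConstant) / (n + 1)) * B = T :=
    ⟨⟨_, (Finset.sum_nonneg fun j _ => by positivity).trans (h_slice 0)⟩, rfl⟩
  rw [hT] at h_slice ⊢
  have h_blei := blei hn (fun i => ‖basisCoeff U i‖₊ ^ 2) T fun k => by
    rw [← NNReal.coe_le_coe]
    simpa [lineSum] using h_slice k
  rw [← NNReal.coe_le_coe] at h_blei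
  simpa using h_blei

theorem exp_mul_rpow_rpow_eq (hn : 0 < n) (c h M : ℝ) :
    (exp (c / (n + 1)) * ((exp (c / 2 * h) * M) ^ 2) ^ (n / (n + 1) : ℝ))
        ^ ((n + 1) ^ 2 / (n * (n + 2)) : ℝ)
      = ((exp (c / 2 * (h + 1 / n)) * M) ^ 2) ^ ((n + 1) / (n + 2) : ℝ) := by
  have : (0 : ℝ) < n := mod_cast hn
  have h_exp : exp (c / (n + 1)) = exp (c / n) ^ (n / (n + 1) : ℝ) := by
    rw [← exp_mul]
    congr 1
    field_simp
  have h_sq : exp (c / n) * (exp (c / 2 * h) * M) ^ 2 = (exp (c / 2 * (h + 1 / n)) * M) ^ 2 := by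
    rw [mul_pow, mul_pow, ← mul_assoc, ← exp_nat_mul, ← exp_nat_mul, ← exp_add]
    congr 2
    push_cast
    ring
  rw [h_exp, ← mul_rpow (by positivity) (by positivity), h_sq, ← rpow_mul (by positivity)]
  congr 1
  field_simp

theorem bohnenblustHille (hn : 0 < n) {U : MultilinearMap ℂ (fun _ : Fin n => ι → ℂ) ℂ} {M : ℝ}
    (hU : IsPolydiscBound U M) :
    ∑ i, (‖basisCoeff U i‖ ^ 2) ^ (n / (n + 1) : ℝ)
      ≤ ((exp ((1 - eulerMascheroniConstant) / 2 * harmonic (n - 1)) * M) ^ 2)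
        ^ (n / (n + 1) : ℝ) := by
  have hM : 0 ≤ M := (norm_nonneg _).trans (hU 0 (by simp))
  induction n, hn using Nat.le_induction with
  | base =>
    have h_half : ((1 : ℕ) / ((1 : ℕ) + 1) : ℝ) = 1 / 2 := by norm_num
    simpa only [h_half, ← sqrt_eq_rpow, sqrt_sq, norm_nonneg, hM, tsub_self, harmonic_zero,
      Rat.cast_zero, mul_zero, exp_zero, one_mul] using hU.sum_norm_basisCoeff_le
  | succ n hn ih =>
    have h_step := sum_rpow_norm_basisCoeff_sq_le_rpow hn hU fun V hV => ih hV
    rw [exp_mul_rpow_rpow_eq hn] at h_step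
    have h_harmonic : (harmonic (n + 1 - 1) : ℝ) = harmonic (n - 1) + 1 / n := by
      obtain ⟨m, rfl⟩ := Nat.exists_eq_add_of_le' hn
      simp [harmonic_succ]
    have h_exponent : ((n + 1 : ℕ) / ((n + 1 : ℕ) + 1) : ℝ) = (n + 1) / (n + 2) := by
      push_cast
      ring
    rwa [h_harmonic, h_exponent]

end BohnenblustHille

section HarmonicEstimate

theorem exp_mul_harmonic_le_rpow {m : ℕ} (hm : 32 ≤ m) :
    exp ((1 - eulerMascheroniConstant) / 2 * harmonic m) ≤ (m : ℝ) ^ (0.304975 : ℝ) := by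
  have hm' : (32 : ℝ) ≤ m := mod_cast hm
  have h_harmonic : (harmonic m : ℝ) ≤ log m + 2 / 3 := by
    have h_seq : eulerMascheroniSeq' m ≤ 2 / 3 :=
      (strictAnti_eulerMascheroniSeq'.antitone (by lia)).trans
        eulerMascheroniSeq'_six_lt_two_thirds.le
    rw [eulerMascheroniSeq', if_neg (by lia)] at h_seq
    linarith
  have h_log : 3.46 ≤ log m :=
    calc (3.46 : ℝ) ≤ 5 * log 2 := by linarith [log_two_gt_d9]
      _ = log (2 ^ 5) := by rw [log_pow]; norm_num
      _ ≤ log m := log_le_log (by norm_num) (by linarith)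
  rw [rpow_def_of_pos (by linarith), exp_le_exp]
  calc (1 - eulerMascheroniConstant) / 2 * harmonic m ≤ 1 / 4 * (log m + 2 / 3) := by
        refine mul_le_mul ?_ h_harmonic (mod_cast (harmonic_pos (by lia)).le) (by norm_num)
        linarith [one_half_lt_eulerMascheroniConstant]
    _ ≤ log m * 0.304975 := by linarith

end HarmonicEstimate

theorem stmt11_general (n N : ℕ) (hn : 0 < n)
    (U : ContinuousMultilinearMap ℂ (fun _ : Fin n => (Fin N → ℂ)) ℂ) :
    BHcomplex n N U
      ≤ exp ((1 - eulerMascheroniConstant) / 2 * harmonic (n - 1)) * ‖U‖ := by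
  have h_polydisc : IsPolydiscBound U.toMultilinearMap ‖U‖ := fun z hz =>
    (U.le_opNorm z).trans <| mul_le_of_le_one_right (norm_nonneg _) <|
      Finset.prod_le_one (fun _ _ => norm_nonneg _) fun k _ => hz k
  have h_exponent : (2 * n / (n + 1) : ℝ) = (2 : ℕ) * (n / (n + 1)) := by push_cast; ring
  have h_inv : ((n + 1) / (2 * n) : ℝ) = (2 * n / (n + 1) : ℝ)⁻¹ := (inv_div _ _).symm
  have h_sum := bohnenblustHille hn h_polydisc
  simp only [← rpow_natCast_mul (mul_nonneg (exp_pos _).le (norm_nonneg U)),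
    ← rpow_natCast_mul (norm_nonneg _), ← h_exponent] at h_sum
  rw [BHcomplex, h_inv, rpow_inv_le_iff_of_pos (by positivity) (by positivity) (by positivity)]
  exact h_sum

theorem stmt11 (n : ℕ) (hn : 2 ^ 5 < n) (N : ℕ) (hN : 0 < N)
    (U : ContinuousMultilinearMap ℂ (fun _ : Fin n => (Fin N → ℂ)) ℂ) :
    BHcomplex n N U ≤ 1.00123230777 * ((n : ℝ) - 1) ^ (0.304975 : ℝ) * ‖U‖ := by
  refine (stmt11_general n N (by lia) U).trans ?_
  gcongr
  rw [← Nat.cast_pred (by lia)]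
  exact (exp_mul_harmonic_le_rpow (by lia)).trans
    (le_mul_of_one_le_left (by positivity) (by norm_num))
end

section
/- For every integer n > 2^6 = 64, every positive integer N, and every n-linear form U : (ℂ^N)^n → ℂ, one has (∑_{i₁,…,iₙ=1}^N |U(e_{i₁},…,e_{iₙ})|^{2n/(n+1)})^{(n+1)/(2n)} ≤ 0.99632125476 · (n-1)^{0.304975} · ‖U‖. -/
open Real

/-!
Write `ζ_t` for independent Steinhaus variables. If `∑ |v_t|² = 1` and `X = |∑ v_t ζ_t|²`, then
`𝔼 X = 1`, and Jensen's inequality gives `𝔼 X^{1-δ} ≥ exp (-δ 𝔼 (X log X))`. Bounding `log` by a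
cubic polynomial reduces `𝔼 (X log X) ≤ 79/150` to the first four moments of `X`; roots of unity of
order five have the same moments, so all averages are finite. This is Khinchine's inequality
`(∑ |v_t|²)^{p/2} ≤ exp (79/300 (2 - p)) 𝔼 |∑ v_t ζ_t|^p` for `p ≤ 2`.

Averaging one argument of an `(n+1)`-linear form over the `ζ_t` bounds its mixed
`(ℓ², ℓ^{2n/(n+1)})`-norms by the constant of degree `n` times `exp (79/300 / n)`, and Blei's
inequality, a consequence of the Hölder and Loomis–Whitney inequalities, interpolates between these
mixed norms. The constant of degree `n` is therefore at most `exp (79/300 H_{n-1})`, and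
`H_{n-1} - log (n-1)` is bounded since it decreases to the Euler–Mascheroni constant.
-/

open Finset
open scoped BigOperators ComplexConjugate NNReal

section Holder

variable {α κ : Type*} [Fintype α]

theorem sum_prod_rpow_le_prod_sum_rpow_s12 (s : Finset κ) (f : κ → α → ℝ≥0) {p : κ → ℝ}
    (hp : ∑ k ∈ s, p k = 1) (hp₀ : ∀ k ∈ s, 0 ≤ p k) :
    ∑ x, ∏ k ∈ s, f k x ^ p k ≤ ∏ k ∈ s, (∑ x, f k x) ^ p k := by
  let : MeasurableSpace α := ⊤
  have h := ENNReal.lintegral_prod_norm_pow_le (μ := MeasureTheory.Measure.count) s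
    (f := fun k x ↦ (f k x : ENNReal)) (fun k _ ↦ (measurable_of_finite _).aemeasurable) hp hp₀
  simp only [MeasureTheory.lintegral_count, tsum_fintype] at h
  have hs : ∀ k ∈ s, (∑ x, (f k x : ENNReal)) ^ p k = ((∑ x, f k x) ^ p k : ℝ≥0) := fun k hk ↦ by
    rw [ENNReal.coe_rpow_of_nonneg _ (hp₀ k hk), ENNReal.ofNNReal_finsetSum]
  have hx : ∀ x, ∀ k ∈ s, (f k x : ENNReal) ^ p k = (f k x ^ p k : ℝ≥0) := fun x k hk ↦
    (ENNReal.coe_rpow_of_nonneg _ (hp₀ k hk)).symm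
  simp only [prod_congr rfl hs, fun x ↦ prod_congr rfl (hx x)] at h
  exact_mod_cast h

theorem sum_rpow_mul_rpow_le_s12 (f g : α → ℝ≥0) {p q : ℝ} (hp : 0 ≤ p) (hq : 0 ≤ q)
    (hpq : p + q = 1) :
    ∑ x, f x ^ p * g x ^ q ≤ (∑ x, f x) ^ p * (∑ x, g x) ^ q := by
  simpa [Fin.prod_univ_two] using sum_prod_rpow_le_prod_sum_rpow_s12 (univ : Finset (Fin 2)) ![f, g]
    (p := ![p, q]) (by simpa [Fin.sum_univ_two] using hpq) (by simp [Fin.forall_fin_two, hp, hq])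

theorem sum_prod_rpow_inv_card_le [Fintype κ] [Nonempty κ] (f : κ → α → ℝ≥0) :
    ∑ x, (∏ k, f k x) ^ ((Fintype.card κ : ℝ)⁻¹) ≤
      (∏ k, ∑ x, f k x) ^ ((Fintype.card κ : ℝ)⁻¹) := by
  simpa only [NNReal.finsetProd_rpow] using sum_prod_rpow_le_prod_sum_rpow_s12 univ f
    (p := fun _ ↦ (Fintype.card κ : ℝ)⁻¹) (by simp) (fun _ _ ↦ by positivity)

theorem sum_mul_rpow_inv_succ_le {n : ℕ} (hn : n ≠ 0)
    (f h : α → ℝ≥0) {C : ℝ≥0} (hh : ∑ j, h j ^ (n⁻¹ : ℝ) ≤ C ^ (n⁻¹ : ℝ)) :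
    ∑ j, (f j * h j) ^ (((n + 1 : ℕ) : ℝ)⁻¹) ≤ ((∑ j, f j) * C) ^ (((n + 1 : ℕ) : ℝ)⁻¹) := by
  have hroot (x : ℝ≥0) : x ^ (((n + 1 : ℕ) : ℝ)⁻¹) = (x ^ (n⁻¹ : ℝ)) ^ (n / (n + 1 : ℕ) : ℝ) := by
    rw [← NNReal.rpow_mul]
    congr 1
    field_simp
  simp only [NNReal.mul_rpow]
  simp only [hroot C, hroot (h _)]
  refine (sum_rpow_mul_rpow_le_s12 f _ (by positivity) (by positivity) ?_).trans (by gcongr)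
  push_cast
  field_simp
  ring

end Holder

section LoomisWhitney

theorem removeNth_succ_cons {ι : Type*} {n : ℕ} (l : Fin (n + 1)) (t : ι) (j : Fin (n + 1) → ι) :
    l.succ.removeNth (Fin.cons t j : Fin (n + 2) → ι) = Fin.cons t (l.removeNth j) := by
  ext x
  refine Fin.cases ?_ (fun x ↦ ?_) x <;> simp [Fin.removeNth]

variable {ι : Type*} [Fintype ι]

theorem sum_fin_succ_eq_sum_insertNth {M : Type*} [AddCommMonoid M] {n : ℕ} (k : Fin (n + 1))
    (F : (Fin (n + 1) → ι) → M) : ∑ i, F i = ∑ j, ∑ t, F (k.insertNth t j) := by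
  rw [← (Fin.insertNthEquiv (fun _ ↦ ι) k).sum_comp, Fintype.sum_prod_type_right]
  rfl

theorem sum_fin_succ_eq_sum_cons {M : Type*} [AddCommMonoid M] {n : ℕ}
    (F : (Fin (n + 1) → ι) → M) : ∑ i, F i = ∑ t, ∑ j, F (Fin.cons t j) := by
  rw [← (Fin.consEquiv (fun _ ↦ ι)).sum_comp, Fintype.sum_prod_type]
  rfl

/-- The **Loomis–Whitney inequality** for functions on a finite product. -/
theorem sum_prod_removeNth_rpow_inv_le {n : ℕ} (hn : n ≠ 0)
    (g : Fin (n + 1) → (Fin n → ι) → ℝ≥0) :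
    ∑ i : Fin (n + 1) → ι, (∏ k, g k (k.removeNth i)) ^ (n⁻¹ : ℝ) ≤
      (∏ k, ∑ j, g k j) ^ (n⁻¹ : ℝ) := by
  induction n, Nat.one_le_iff_ne_zero.2 hn using Nat.le_induction with
  | base =>
    have hcons (t : ι) (j : Fin 1 → ι) :
        (1 : Fin 2).removeNth (Fin.cons t j : Fin 2 → ι) = fun _ ↦ t := by
      ext x
      fin_cases x
      rfl
    have h₁ : ∑ j, g 1 j = ∑ t, g 1 fun _ ↦ t :=
      ((Equiv.funUnique (Fin 1) ι).symm.sum_comp (g 1)).symm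
    simp [sum_fin_succ_eq_sum_cons (n := 1), hcons, Fin.prod_univ_two, h₁, sum_mul, mul_sum,
      sum_comm (s := (univ : Finset ι))]
  | succ n hn₁ ih =>
    have hn₀ := Nat.one_le_iff_ne_zero.1 hn₁
    set r : ℝ := ((n + 1 : ℕ) : ℝ)⁻¹ with hr
    have hslice (t : ι) :
        ∑ j, (g 0 j * ∏ l : Fin (n + 1), g l.succ (Fin.cons t (l.removeNth j))) ^ r ≤
          ((∑ j, g 0 j) * ∏ l : Fin (n + 1), ∑ j, g l.succ (Fin.cons t j)) ^ r :=
      sum_mul_rpow_inv_succ_le hn₀ (g 0) _ (ih hn₀ fun l j ↦ g l.succ (Fin.cons t j))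
    calc ∑ i : Fin (n + 2) → ι, (∏ k, g k (k.removeNth i)) ^ r
      _ = ∑ t, ∑ j, (g 0 j * ∏ l : Fin (n + 1), g l.succ (Fin.cons t (l.removeNth j))) ^ r := by
          simp only [sum_fin_succ_eq_sum_cons (n := n + 1), Fin.prod_univ_succ (n := n + 1),
            removeNth_succ_cons]
          rfl
      _ ≤ ∑ t, ((∑ j, g 0 j) * ∏ l : Fin (n + 1), ∑ j, g l.succ (Fin.cons t j)) ^ r :=
          sum_le_sum fun t _ ↦ hslice t
      _ ≤ ((∑ j, g 0 j) * ∏ l : Fin (n + 1), ∑ t, ∑ j, g l.succ (Fin.cons t j)) ^ r := by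
          simp only [NNReal.mul_rpow, ← mul_sum]
          gcongr
          simpa [hr] using sum_prod_rpow_inv_card_le fun (l : Fin (n + 1)) (t : ι) ↦
            ∑ j, g l.succ (Fin.cons t j)
      _ = (∏ k, ∑ j, g k j) ^ r := by
          simp only [Fin.prod_univ_succ (n := n + 1), ← sum_fin_succ_eq_sum_cons (g _)]

end LoomisWhitney

section Blei

variable {ι : Type*} [Fintype ι]

theorem sum_rpow_neg_mul_eq {n : ℕ} (hn : n ≠ 0) (k : Fin (n + 1)) (b : (Fin (n + 1) → ι) → ℝ≥0) :
    ∑ i, (∑ t, b (k.insertNth t (k.removeNth i))) ^ (-(n + 1 : ℝ)⁻¹) * b i =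
      ∑ j, (∑ t, b (k.insertNth t j)) ^ (n / (n + 1) : ℝ) := by
  rw [sum_fin_succ_eq_sum_insertNth k]
  refine sum_congr rfl fun j _ ↦ ?_
  simp only [Fin.removeNth_insertNth, ← mul_sum]
  obtain hA | hA := eq_or_ne (∑ t, b (k.insertNth t j)) 0
  · rw [hA, mul_zero, NNReal.zero_rpow (by positivity)]
  · rw [← NNReal.rpow_add_one hA]
    congr 1
    field_simp
    ring

theorem rpow_eq_prod_rpow_mul_prod_rpow {n : ℕ} (hn : n ≠ 0) {x : ℝ≥0} {A : Fin (n + 1) → ℝ≥0}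
    (hA : ∀ k, A k ≠ 0) :
    x ^ ((n + 1) / (n + 2) : ℝ) =
      ((∏ k, A k ^ (-(n + 1 : ℝ)⁻¹) * x) ^ (n + 1 : ℝ)⁻¹) ^ ((n + 1) / (n + 2) : ℝ) *
        ((∏ k, A k ^ (n / (n + 1) : ℝ)) ^ (n⁻¹ : ℝ)) ^ (1 / (n + 2) : ℝ) := by
  have hP : ∏ k, A k ≠ 0 := prod_ne_zero_iff.2 fun k _ ↦ hA k
  simp only [prod_mul_distrib, NNReal.finsetProd_rpow, prod_const, card_univ, Fintype.card_fin,
    NNReal.mul_rpow, ← NNReal.rpow_mul, ← NNReal.rpow_natCast]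
  rw [mul_right_comm, ← NNReal.rpow_add hP]
  convert (one_mul _).symm using 2
  · convert NNReal.rpow_zero _ using 2
    field_simp
    ring
  · congr 1
    push_cast
    field_simp

/-- **Blei's inequality** for mixed `(ℓ¹, ℓ^{n/(n+1)})`-norms. -/
theorem sum_rpow_le_prod_sum_sum_rpow {n : ℕ} (hn : n ≠ 0) (b : (Fin (n + 1) → ι) → ℝ≥0) :
    ∑ i, b i ^ ((n + 1) / (n + 2) : ℝ) ≤
      (∏ k : Fin (n + 1), ∑ j, (∑ t, b (k.insertNth t j)) ^ (n / (n + 1) : ℝ)) ^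
        ((n + 1) / (n * (n + 2)) : ℝ) := by
  set A : Fin (n + 1) → (Fin n → ι) → ℝ≥0 := fun k j ↦ ∑ t, b (k.insertNth t j)
  set T : Fin (n + 1) → (Fin (n + 1) → ι) → ℝ≥0 := fun k i ↦
    A k (k.removeNth i) ^ (-(n + 1 : ℝ)⁻¹) * b i
  set W : (Fin (n + 1) → ι) → ℝ≥0 := fun i ↦
    (∏ k, A k (k.removeNth i) ^ (n / (n + 1) : ℝ)) ^ (n⁻¹ : ℝ)
  set M : ℝ≥0 := ∏ k, ∑ j, A k j ^ (n / (n + 1) : ℝ)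
  have hpoint (i) : b i ^ ((n + 1) / (n + 2) : ℝ) ≤
      ((∏ k, T k i) ^ (n + 1 : ℝ)⁻¹) ^ ((n + 1) / (n + 2) : ℝ) * W i ^ (1 / (n + 2) : ℝ) := by
    obtain hb | hb := eq_or_ne (b i) 0
    · rw [hb, NNReal.zero_rpow (by positivity)]
      exact zero_le
    · refine (rpow_eq_prod_rpow_mul_prod_rpow hn fun k h ↦ hb ?_).le
      simpa using (sum_eq_zero_iff.1 h) (i k) (mem_univ _)
  have hTM : ∑ i, (∏ k, T k i) ^ (n + 1 : ℝ)⁻¹ ≤ M ^ (n + 1 : ℝ)⁻¹ := by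
    have hTk (k) : ∑ i, T k i = ∑ j, A k j ^ (n / (n + 1) : ℝ) := sum_rpow_neg_mul_eq hn k b
    simpa only [hTk, Fintype.card_fin, Nat.cast_succ] using sum_prod_rpow_inv_card_le T
  have hWM : ∑ i, W i ≤ M ^ (n⁻¹ : ℝ) :=
    sum_prod_removeNth_rpow_inv_le hn fun k j ↦ A k j ^ (n / (n + 1) : ℝ)
  calc ∑ i, b i ^ ((n + 1) / (n + 2) : ℝ)
    _ ≤ (∑ i, (∏ k, T k i) ^ (n + 1 : ℝ)⁻¹) ^ ((n + 1) / (n + 2) : ℝ) *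
          (∑ i, W i) ^ (1 / (n + 2) : ℝ) :=
        (sum_le_sum fun i _ ↦ hpoint i).trans <|
          sum_rpow_mul_rpow_le_s12 _ _ (by positivity) (by positivity) (by field_simp; ring)
    _ ≤ (M ^ (n + 1 : ℝ)⁻¹) ^ ((n + 1) / (n + 2) : ℝ) * (M ^ (n⁻¹ : ℝ)) ^ (1 / (n + 2) : ℝ) := by
        gcongr
    _ = M ^ ((n + 1) / (n * (n + 2)) : ℝ) := by
        rw [← NNReal.rpow_mul, ← NNReal.rpow_mul,
          ← NNReal.rpow_add_of_nonneg _ (by positivity) (by positivity)]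
        congr 1
        field_simp

theorem sum_rpow_le_of_forall_sum_sum_rpow_le {n : ℕ} (hn : n ≠ 0) {b : (Fin (n + 1) → ι) → ℝ≥0}
    {D : ℝ≥0} (hb : ∀ k : Fin (n + 1),
      ∑ j, (∑ t, b (k.insertNth t j)) ^ (n / (n + 1) : ℝ) ≤ D ^ (n / (n + 1) : ℝ)) :
    ∑ i, b i ^ ((n + 1) / (n + 2) : ℝ) ≤ D ^ ((n + 1) / (n + 2) : ℝ) := by
  calc ∑ i, b i ^ ((n + 1) / (n + 2) : ℝ)
    _ ≤ (∏ _k : Fin (n + 1), D ^ (n / (n + 1) : ℝ)) ^ ((n + 1) / (n * (n + 2)) : ℝ) := by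
        refine (sum_rpow_le_prod_sum_sum_rpow hn b).trans ?_
        gcongr with k
        exact hb k
    _ = D ^ ((n + 1) / (n + 2) : ℝ) := by
        rw [prod_const, card_univ, Fintype.card_fin, ← NNReal.rpow_natCast, ← NNReal.rpow_mul,
          ← NNReal.rpow_mul]
        congr 1
        push_cast
        field_simp

end Blei

section Steinhaus

theorem expect_eq_expect_expect_add_right {G H : Type*} [AddGroup G] [Fintype G] [Fintype H]
    [Nonempty H] (F : G → ℝ) (f : H → G) : 𝔼 g, F g = 𝔼 h, 𝔼 g, F (g + f h) := by
  rw [← Fintype.expect_const (ι := H) (𝔼 g, F g)]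
  exact expect_congr rfl fun h _ ↦
    (Fintype.expect_equiv (Equiv.addRight (f h)) _ _ fun _ ↦ rfl).symm

variable {K : ℕ} [NeZero K]

theorem expect_stdAddChar_pow_mul_conj_pow {i j : ℕ} (hi : i < K) (hj : j < K) :
    𝔼 s : ZMod K, (ZMod.stdAddChar s : ℂ) ^ i * conj (ZMod.stdAddChar s : ℂ) ^ j =
      if i = j then 1 else 0 := by
  have hchar (s : ZMod K) : (ZMod.stdAddChar s : ℂ) ^ i * conj (ZMod.stdAddChar s : ℂ) ^ j =
      (ZMod.stdAddChar (s * (i - j) : ZMod K) : ℂ) := by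
    rw [← AddChar.map_neg_eq_conj, ← AddChar.map_nsmul_eq_pow, ← AddChar.map_nsmul_eq_pow,
      ← AddChar.map_add_eq_mul]
    congr 1
    simp only [nsmul_eq_mul]
    ring
  have hij : (i : ZMod K) - j = 0 ↔ i = j := by
    rw [sub_eq_zero, ZMod.natCast_eq_natCast_iff', Nat.mod_eq_of_lt hi, Nat.mod_eq_of_lt hj]
  simp [hchar, Fintype.expect_eq_sum_div_card, AddChar.sum_mulShift _
    (ZMod.isPrimitive_stdAddChar K), hij, ZMod.card, ite_div, NeZero.ne K]

theorem expect_norm_sum_mul_stdAddChar_pow_sq (c : ℕ → ℂ) {n : ℕ} (hn : n ≤ K) :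
    𝔼 s : ZMod K, ‖∑ j ∈ range n, c j * (ZMod.stdAddChar s : ℂ) ^ j‖ ^ 2 =
      ∑ j ∈ range n, ‖c j‖ ^ 2 := by
  have hexpand (s : ZMod K) : ((‖∑ j ∈ range n, c j * (ZMod.stdAddChar s : ℂ) ^ j‖ ^ 2 : ℝ) : ℂ) =
      ∑ i ∈ range n, ∑ j ∈ range n, c i * conj (c j) *
        ((ZMod.stdAddChar s : ℂ) ^ i * conj (ZMod.stdAddChar s : ℂ) ^ j) := by
    rw [Complex.ofReal_pow, ← Complex.mul_conj', map_sum, sum_mul_sum]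
    exact sum_congr rfl fun i _ ↦ sum_congr rfl fun j _ ↦ by rw [map_mul, map_pow]; ring
  apply Complex.ofReal_injective
  simp only [Complex.ofReal_expect, Complex.ofReal_sum, hexpand, expect_sum_comm, ← mul_expect]
  refine sum_congr rfl fun i hi ↦ ?_
  rw [mem_range] at hi
  calc ∑ j ∈ range n, c i * conj (c j) *
        𝔼 s : ZMod K, (ZMod.stdAddChar s : ℂ) ^ i * conj (ZMod.stdAddChar s : ℂ) ^ j
    _ = ∑ j ∈ range n, c i * conj (c j) * if i = j then 1 else 0 :=
        sum_congr rfl fun j hj ↦ by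
          rw [expect_stdAddChar_pow_mul_conj_pow (hi.trans_le hn) ((mem_range.1 hj).trans_le hn)]
    _ = ((‖c i‖ ^ 2 : ℝ) : ℂ) := by
        simp [hi, Complex.mul_conj']

theorem expect_norm_add_mul_stdAddChar_pow (T b : ℂ) {k : ℕ} (hk : k < K) :
    𝔼 s : ZMod K, (‖T + b * ZMod.stdAddChar s‖ ^ 2) ^ k =
      ∑ j ∈ range (k + 1), (k.choose j : ℝ) ^ 2 * (‖T‖ ^ 2) ^ (k - j) * (‖b‖ ^ 2) ^ j := by
  have hbinom (s : ZMod K) : (‖T + b * ZMod.stdAddChar s‖ ^ 2) ^ k =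
      ‖∑ j ∈ range (k + 1), T ^ (k - j) * b ^ j * k.choose j * ZMod.stdAddChar s ^ j‖ ^ 2 := by
    rw [pow_right_comm, ← norm_pow, add_comm, add_pow]
    congr 2
    exact sum_congr rfl fun j _ ↦ by ring
  simp only [hbinom]
  rw [expect_norm_sum_mul_stdAddChar_pow_sq _ hk]
  refine sum_congr rfl fun j _ ↦ ?_
  simp only [norm_mul, norm_pow, Complex.norm_natCast]
  ring

variable {ι : Type*} [Fintype ι] [DecidableEq ι]

/-- The moment `𝔼 |∑_{t ∈ s} v_t ζ_t|^{2k}` of a Steinhaus sum. The independent variables `ζ_t`,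
uniform on the unit circle, are replaced by the roots of unity `ZMod.stdAddChar (ω t)` with
`ω : ι → ZMod K` uniform, which does not change the moments with `k < K`. -/
noncomputable def steinhausMoment (K : ℕ) [NeZero K] (v : ι → ℂ) (k : ℕ) (s : Finset ι) : ℝ :=
  𝔼 ω : ι → ZMod K, (‖∑ t ∈ s, v t * ZMod.stdAddChar (ω t)‖ ^ 2) ^ k

theorem steinhausMoment_insert (v : ι → ℂ) {k : ℕ} (hk : k < K) {a : ι} {s : Finset ι}
    (ha : a ∉ s) :
    steinhausMoment K v k (insert a s) = ∑ j ∈ range (k + 1),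
      (k.choose j : ℝ) ^ 2 * steinhausMoment K v (k - j) s * (‖v a‖ ^ 2) ^ j := by
  let S : (ι → ZMod K) → ℂ := fun ω ↦ ∑ t ∈ s, v t * ZMod.stdAddChar (ω t)
  have hshift (ω : ι → ZMod K) (x : ZMod K) :
      ∑ t ∈ insert a s, v t * ZMod.stdAddChar ((ω + Pi.single a x : ι → ZMod K) t) =
        S ω + v a * ZMod.stdAddChar (ω a) * ZMod.stdAddChar x := by
    rw [sum_insert ha, add_comm, Pi.add_apply, Pi.single_eq_same, AddChar.map_add_eq_mul,
      mul_assoc]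
    congr 1
    refine sum_congr rfl fun t ht ↦ ?_
    rw [Pi.add_apply, Pi.single_eq_of_ne (ne_of_mem_of_not_mem ht ha), add_zero]
  calc steinhausMoment K v k (insert a s)
    _ = 𝔼 x : ZMod K, 𝔼 ω : ι → ZMod K, (‖∑ t ∈ insert a s,
          v t * ZMod.stdAddChar ((ω + Pi.single a x : ι → ZMod K) t)‖ ^ 2) ^ k := by
        exact expect_eq_expect_expect_add_right _ (Pi.single a)
    _ = 𝔼 ω : ι → ZMod K, 𝔼 x : ZMod K,
          (‖S ω + v a * ZMod.stdAddChar (ω a) * ZMod.stdAddChar x‖ ^ 2) ^ k := by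
        simp only [hshift]
        exact expect_comm _ _ _
    _ = 𝔼 ω : ι → ZMod K, ∑ j ∈ range (k + 1),
          (k.choose j : ℝ) ^ 2 * (‖S ω‖ ^ 2) ^ (k - j) * (‖v a‖ ^ 2) ^ j := by
        simp only [expect_norm_add_mul_stdAddChar_pow _ _ hk, norm_mul, AddChar.norm_apply, mul_one]
    _ = ∑ j ∈ range (k + 1),
          (k.choose j : ℝ) ^ 2 * steinhausMoment K v (k - j) s * (‖v a‖ ^ 2) ^ j := by
        simp only [expect_sum_comm, ← expect_mul, ← mul_expect]
        rfl

@[simp]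
theorem steinhausMoment_zero (v : ι → ℂ) (s : Finset ι) : steinhausMoment K v 0 s = 1 := by
  simp [steinhausMoment]

theorem steinhausMoment_empty (v : ι → ℂ) {k : ℕ} (hk : k ≠ 0) :
    steinhausMoment K v k ∅ = 0 := by
  simp [steinhausMoment, hk]

theorem steinhausMoment_one (hK : 1 < K) (v : ι → ℂ) (s : Finset ι) :
    steinhausMoment K v 1 s = ∑ t ∈ s, ‖v t‖ ^ 2 := by
  induction s using Finset.induction with
  | empty => simp [steinhausMoment_empty]
  | insert a s ha ih =>
    simp [steinhausMoment_insert v hK ha, sum_range_succ, ih, sum_insert ha, add_comm]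

theorem steinhausMoment_two (hK : 2 < K) (v : ι → ℂ) (s : Finset ι) :
    steinhausMoment K v 2 s =
      2 * (∑ t ∈ s, ‖v t‖ ^ 2) ^ 2 - ∑ t ∈ s, (‖v t‖ ^ 2) ^ 2 := by
  induction s using Finset.induction with
  | empty => simp [steinhausMoment_empty]
  | insert a s ha ih =>
    simp only [steinhausMoment_insert v hK ha, sum_range_succ, range_zero, sum_empty, ih,
      steinhausMoment_one (by lia : 1 < K), steinhausMoment_zero, sum_insert ha, Nat.choose,
      Nat.sub_self]
    push_cast
    ring

theorem steinhausMoment_three (hK : 3 < K) (v : ι → ℂ) (s : Finset ι) :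
    steinhausMoment K v 3 s =
      6 * (∑ t ∈ s, ‖v t‖ ^ 2) ^ 3 - 9 * (∑ t ∈ s, ‖v t‖ ^ 2) * ∑ t ∈ s, (‖v t‖ ^ 2) ^ 2 +
        4 * ∑ t ∈ s, (‖v t‖ ^ 2) ^ 3 := by
  induction s using Finset.induction with
  | empty => simp [steinhausMoment_empty]
  | insert a s ha ih =>
    simp only [steinhausMoment_insert v hK ha, sum_range_succ, range_zero, sum_empty, ih,
      steinhausMoment_one (by lia : 1 < K), steinhausMoment_two (by lia : 2 < K),
      steinhausMoment_zero, sum_insert ha, Nat.choose, Nat.sub_self]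
    push_cast
    ring

theorem steinhausMoment_four (hK : 4 < K) (v : ι → ℂ) (s : Finset ι) :
    steinhausMoment K v 4 s =
      24 * (∑ t ∈ s, ‖v t‖ ^ 2) ^ 4 - 72 * (∑ t ∈ s, ‖v t‖ ^ 2) ^ 2 * ∑ t ∈ s, (‖v t‖ ^ 2) ^ 2 +
        18 * (∑ t ∈ s, (‖v t‖ ^ 2) ^ 2) ^ 2 +
        64 * (∑ t ∈ s, ‖v t‖ ^ 2) * ∑ t ∈ s, (‖v t‖ ^ 2) ^ 3 -
        33 * ∑ t ∈ s, (‖v t‖ ^ 2) ^ 4 := by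
  induction s using Finset.induction with
  | empty => simp [steinhausMoment_empty]
  | insert a s ha ih =>
    simp only [steinhausMoment_insert v hK ha, sum_range_succ, range_zero, sum_empty, ih,
      steinhausMoment_one (by lia : 1 < K), steinhausMoment_two (by lia : 2 < K),
      steinhausMoment_three (by lia : 3 < K), steinhausMoment_zero, sum_insert ha, Nat.choose,
      Nat.sub_self]
    push_cast
    ring

end Steinhaus

section LogMajorant

theorem log_four_thirds_lt : log (4 / 3) < 0.2885 := by
  rw [log_lt_iff_lt_exp (by norm_num)]
  refine lt_of_lt_of_le ?_ (sum_le_exp_of_nonneg (by norm_num) 5)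
  norm_num [sum_range_succ, Nat.factorial]

theorem log_five_lt : log 5 < 1.6165 := by
  have h54 : log (5 / 4) < 0.224 := by
    rw [log_lt_iff_lt_exp (by norm_num)]
    refine lt_of_lt_of_le ?_ (sum_le_exp_of_nonneg (by norm_num) 5)
    norm_num [sum_range_succ, Nat.factorial]
  rw [log_div (by norm_num) (by norm_num), show (4 : ℝ) = 2 ^ 2 by norm_num, log_pow] at h54
  push_cast at h54
  linarith [log_two_lt_d9]

-- The cubic is tangent to `log`, up to a small shift, at `4 / 3` and at `5`, and the derivative of
-- the difference has its third root at `3`.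
theorem log_le_cubic {x : ℝ} (hx : 0 < x) :
    log x ≤ -(26 / 25) + 77 / 60 * x - 7 / 30 * x ^ 2 + 1 / 60 * x ^ 3 := by
  set f : ℝ → ℝ := fun y ↦ -(26 / 25) + 77 / 60 * y - 7 / 30 * y ^ 2 + 1 / 60 * y ^ 3 - log y
  have hderiv {y : ℝ} (hy : 0 < y) :
      HasDerivAt f ((y - 4 / 3) * (y - 3) * (y - 5) / (20 * y)) y := by
    refine HasDerivAt.congr_deriv (((((hasDerivAt_id y).const_mul _).const_add _).sub
      ((hasDerivAt_pow 2 y).const_mul _)).add ((hasDerivAt_pow 3 y).const_mul _) |>.sub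
      (hasDerivAt_log hy.ne')) ?_
    field_simp
    ring
  have hcont {y : ℝ} (hy : 0 < y) : ContinuousAt f y := (hderiv hy).continuousAt
  have hdiff {s : Set ℝ} (hs : s ⊆ Set.Ioi 0) : DifferentiableOn ℝ f s := fun y hy ↦
    (hderiv (hs hy)).differentiableAt.differentiableWithinAt
  have hleft : IsMinOn f (Set.Ioc 0 3) (4 / 3) := by
    refine isMinOn_Ioc_of_deriv (hcont (by norm_num)) (hcont (by norm_num))
      (hdiff fun y hy ↦ hy.1) (hdiff fun y hy ↦ lt_trans (by norm_num) hy.1)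
      (fun y ⟨hy₀, hy⟩ ↦ ?_) (fun y ⟨hy₀, hy⟩ ↦ ?_)
    · rw [(hderiv hy₀).deriv]
      exact div_nonpos_of_nonpos_of_nonneg (mul_nonpos_of_nonneg_of_nonpos (by nlinarith)
        (by linarith)) (by linarith)
    · rw [(hderiv (by linarith)).deriv]
      exact div_nonneg (mul_nonneg_of_nonpos_of_nonpos (by nlinarith) (by linarith)) (by linarith)
  have hright : IsMinOn f (Set.Ici 3) 5 := by
    refine isMinOn_Ici_of_deriv (hcont (by norm_num)) (hcont (by norm_num))
      (hdiff fun y hy ↦ lt_trans (by norm_num) hy.1) (hdiff (Set.Ioi_subset_Ioi (by simp)))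
      (fun y ⟨hy₀, hy⟩ ↦ ?_) (fun y (hy : 5 < y) ↦ ?_)
    · rw [(hderiv (by linarith)).deriv]
      exact div_nonpos_of_nonpos_of_nonneg (mul_nonpos_of_nonneg_of_nonpos (by nlinarith)
        (by linarith)) (by linarith)
    · rw [(hderiv (by linarith)).deriv]
      exact div_nonneg (mul_nonneg (by nlinarith) (by linarith)) (by linarith)
  suffices 0 ≤ f x from sub_nonneg.1 this
  obtain hx₃ | hx₃ := le_total x 3
  · exact le_trans (by simp only [f]; linarith [log_four_thirds_lt]) (hleft ⟨hx, hx₃⟩)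
  · exact le_trans (by simp only [f]; linarith [log_five_lt]) (hright hx₃)

end LogMajorant

section Entropy

-- The left-hand side is `60` times the excess over `79 / 150` of the combination of moments in
-- `expect_steinhaus_mul_log_le`.
theorem power_sum_combination_nonpos {ι : Type*} (s : Finset ι) {y : ι → ℝ}
    (hy : ∀ t ∈ s, 0 ≤ y t) (hsum : ∑ t ∈ s, y t = 1) :
    -23 * ∑ t ∈ s, y t ^ 2 + 8 * ∑ t ∈ s, y t ^ 3 + 18 * (∑ t ∈ s, y t ^ 2) ^ 2 -
      33 * ∑ t ∈ s, y t ^ 4 ≤ 0 := by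
  set q := ∑ t ∈ s, y t ^ 2
  have hcauchy : q ^ 2 ≤ ∑ t ∈ s, y t ^ 3 := by
    have h := sum_sq_le_sum_mul_sum_of_sq_le_mul s hy (fun t ht ↦ pow_nonneg (hy t ht) 3)
      (fun t _ ↦ show (y t ^ 2) ^ 2 ≤ y t * y t ^ 3 from le_of_eq (by ring))
    rwa [hsum, one_mul] at h
  have hterm : ∑ t ∈ s, (-23 * y t ^ 2 + 26 * y t ^ 3 - 33 * y t ^ 4) ≤ 0 :=
    sum_nonpos fun t _ ↦ by nlinarith [sq_nonneg (y t), sq_nonneg (y t * (33 * y t - 13))]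
  simp only [sum_add_distrib, sum_sub_distrib, ← mul_sum] at hterm
  linarith

theorem exp_neg_mul_expect_mul_log_le {κ : Type*} [Fintype κ] {X : κ → ℝ} (hX : ∀ i, 0 ≤ X i)
    (hmean : 𝔼 i, X i = 1) (δ : ℝ) :
    exp (-(δ * 𝔼 i, X i * log (X i))) ≤ 𝔼 i, X i ^ (1 - δ) := by
  set H := 𝔼 i, X i * log (X i)
  have htangent {x : ℝ} (hx : 0 ≤ x) :
      exp (-(δ * H)) * (x - δ * (x * log x - H * x)) ≤ x ^ (1 - δ) := by
    obtain rfl | hx := hx.eq_or_lt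
    · simpa using zero_rpow_nonneg _
    calc exp (-(δ * H)) * (x - δ * (x * log x - H * x))
      _ = exp (-(δ * H)) * (x * (-(δ * (log x - H)) + 1)) := by ring
      _ ≤ exp (-(δ * H)) * (x * exp (-(δ * (log x - H)))) := by
          gcongr
          exact add_one_le_exp _
      _ = exp (log x) * exp (-(δ * H) + -(δ * (log x - H))) := by
          rw [exp_log hx, exp_add]
          ring
      _ = x ^ (1 - δ) := by
          rw [rpow_def_of_pos hx, ← exp_add]
          ring_nf
  calc exp (-(δ * H))
    _ = 𝔼 i, exp (-(δ * H)) * (X i - δ * (X i * log (X i) - H * X i)) := by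
        rw [← mul_expect, expect_sub_distrib, ← mul_expect, expect_sub_distrib, ← mul_expect, hmean]
        ring
    _ ≤ 𝔼 i, X i ^ (1 - δ) := expect_le_expect fun i _ ↦ htangent (hX i)

end Entropy

section Khinchine

variable {ι : Type*} [Fintype ι] [DecidableEq ι] {K : ℕ} [NeZero K]

theorem expect_steinhaus_mul_log_le (hK : 4 < K) {v : ι → ℂ} (hv : ∑ t, ‖v t‖ ^ 2 = 1) :
    𝔼 ω : ι → ZMod K, ‖∑ t, v t * ZMod.stdAddChar (ω t)‖ ^ 2 *
      log (‖∑ t, v t * ZMod.stdAddChar (ω t)‖ ^ 2) ≤ 79 / 150 := by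
  have hcubic {x : ℝ} (hx : 0 ≤ x) :
      x * log x ≤ -(26 / 25) * x ^ 1 + 77 / 60 * x ^ 2 - 7 / 30 * x ^ 3 + 1 / 60 * x ^ 4 := by
    obtain rfl | hx := hx.eq_or_lt
    · norm_num
    · exact (mul_le_mul_of_nonneg_left (log_le_cubic hx) hx.le).trans_eq (by ring)
  calc _ ≤ 𝔼 ω : ι → ZMod K, _ := expect_le_expect fun ω _ ↦ hcubic (sq_nonneg _)
    _ = -(26 / 25) * steinhausMoment K v 1 univ + 77 / 60 * steinhausMoment K v 2 univ -
          7 / 30 * steinhausMoment K v 3 univ + 1 / 60 * steinhausMoment K v 4 univ := by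
        simp only [expect_add_distrib, expect_sub_distrib, ← mul_expect]
        rfl
    _ ≤ 79 / 150 := by
        rw [steinhausMoment_one (by lia), steinhausMoment_two (by lia),
          steinhausMoment_three (by lia), steinhausMoment_four hK, hv]
        linarith [power_sum_combination_nonpos univ (fun t _ ↦ sq_nonneg ‖v t‖) hv]

theorem exp_neg_le_expect_steinhaus (hK : 4 < K) {p : ℝ} (hp : p ≤ 2) {v : ι → ℂ}
    (hv : ∑ t, ‖v t‖ ^ 2 = 1) :
    exp (-(79 / 300 * (2 - p))) ≤
      𝔼 ω : ι → ZMod K, ‖∑ t, v t * ZMod.stdAddChar (ω t)‖ ^ p := by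
  set X : (ι → ZMod K) → ℝ := fun ω ↦ ‖∑ t, v t * ZMod.stdAddChar (ω t)‖ ^ 2
  have hmean : 𝔼 ω, X ω = 1 := by
    simpa [steinhausMoment, hv] using steinhausMoment_one (by lia : 1 < K) v univ
  calc exp (-(79 / 300 * (2 - p)))
    _ ≤ exp (-((1 - p / 2) * 𝔼 ω, X ω * log (X ω))) := by
        rw [exp_le_exp, neg_le_neg_iff]
        nlinarith [expect_steinhaus_mul_log_le hK hv]
    _ ≤ 𝔼 ω, X ω ^ (1 - (1 - p / 2)) :=
        exp_neg_mul_expect_mul_log_le (fun ω ↦ sq_nonneg _) hmean _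
    _ = 𝔼 ω : ι → ZMod K, ‖∑ t, v t * ZMod.stdAddChar (ω t)‖ ^ p :=
        expect_congr rfl fun ω _ ↦ by
          rw [← rpow_natCast_mul (norm_nonneg _)]
          congr 1
          push_cast
          ring

/-- **Khinchine's inequality** for the discretised Steinhaus variables of `steinhausMoment`. -/
theorem rpow_sum_sq_le_expect_steinhaus (hK : 4 < K) {p : ℝ} (hp₀ : 0 < p) (hp : p ≤ 2)
    (v : ι → ℂ) :
    (∑ t, ‖v t‖ ^ 2) ^ (p / 2) ≤ exp (79 / 300 * (2 - p)) *
      𝔼 ω : ι → ZMod K, ‖∑ t, v t * ZMod.stdAddChar (ω t)‖ ^ p := by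
  set Q := ∑ t, ‖v t‖ ^ 2
  have hQ₀ : 0 ≤ Q := sum_nonneg fun t _ ↦ sq_nonneg _
  obtain hQ | hQ := hQ₀.eq_or_lt
  · rw [← hQ, zero_rpow (by positivity)]
    exact mul_nonneg (exp_pos _).le (expect_nonneg fun ω _ ↦ rpow_nonneg (norm_nonneg _) _)
  have hnorm : ∑ t, ‖v t / (√Q : ℝ)‖ ^ 2 = 1 := by
    simp only [norm_div, Complex.norm_real, norm_of_nonneg (sqrt_nonneg Q), div_pow,
      sq_sqrt hQ₀, ← sum_div]
    exact div_self hQ.ne'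
  have hscale (ω : ι → ZMod K) : ‖∑ t, v t / (√Q : ℝ) * ZMod.stdAddChar (ω t)‖ ^ p =
      ‖∑ t, v t * ZMod.stdAddChar (ω t)‖ ^ p / Q ^ (p / 2) := by
    simp only [div_mul_eq_mul_div, ← sum_div]
    rw [norm_div, Complex.norm_real, norm_of_nonneg (sqrt_nonneg Q),
      div_rpow (norm_nonneg _) (sqrt_nonneg Q), ← rpow_div_two_eq_sqrt _ hQ₀]
  have h := exp_neg_le_expect_steinhaus hK hp hnorm
  simp only [hscale, ← expect_div] at h
  rwa [le_div_iff₀ (by positivity), exp_neg, inv_mul_le_iff₀ (exp_pos _)] at h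

end Khinchine

section BohnenblustHille

variable {ι : Type*}

theorem sum_norm_rpow_le_of_forall_sum_sum_sq_rpow_le [Fintype ι] {E : Type*}
    [SeminormedAddGroup E] {n : ℕ} (hn : n ≠ 0) {a : (Fin (n + 1) → ι) → E} {D : ℝ} (hD : 0 ≤ D)
    (ha : ∀ k : Fin (n + 1),
      ∑ j, (∑ t, ‖a (k.insertNth t j)‖ ^ 2) ^ (n / (n + 1) : ℝ) ≤ (D ^ 2) ^ (n / (n + 1) : ℝ)) :
    ∑ i, (‖a i‖ ^ 2) ^ ((n + 1) / (n + 2) : ℝ) ≤ (D ^ 2) ^ ((n + 1) / (n + 2) : ℝ) := by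
  lift D to ℝ≥0 using hD
  have h := sum_rpow_le_of_forall_sum_sum_rpow_le hn (b := fun i ↦ ‖a i‖₊ ^ 2)
    (D := D ^ (2 : ℕ)) fun k ↦ by simpa [← NNReal.coe_le_coe] using ha k
  simpa [← NNReal.coe_le_coe] using h

/-- The tuple `(e_{i₁}, …, e_{iₙ})` of canonical basis vectors of `ℂ^ι`, at which the coefficients
of an `n`-linear form are evaluated. -/
def basisTuple [DecidableEq ι] {n : ℕ} (i : Fin n → ι) : Fin n → ι → ℂ :=
  fun k ↦ Pi.single (i k) 1

theorem basisTuple_insertNth [DecidableEq ι] {n : ℕ} (k : Fin (n + 1)) (t : ι) (j : Fin n → ι) :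
    basisTuple (k.insertNth t j : Fin (n + 1) → ι) =
      k.insertNth (Pi.single t 1 : ι → ℂ) (basisTuple j) := by
  refine Fin.eq_insertNth_iff.2 ⟨by simp [basisTuple], ?_⟩
  ext l : 1
  simp [basisTuple, Fin.removeNth]

variable [Fintype ι]

theorem norm_curryMid_apply_le {n : ℕ}
    (U : ContinuousMultilinearMap ℂ (fun _ : Fin (n + 1) ↦ ι → ℂ) ℂ) (k : Fin (n + 1)) {y : ι → ℂ}
    (hy : ‖y‖ ≤ 1) : ‖U.curryMid k y‖ ≤ ‖U‖ :=
  ((U.curryMid k).le_of_opNorm_le_of_le (U.norm_curryMid k).le hy).trans_eq (mul_one _)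

variable [DecidableEq ι]

theorem curryMid_apply_basisTuple {n : ℕ}
    (U : ContinuousMultilinearMap ℂ (fun _ : Fin (n + 1) ↦ ι → ℂ) ℂ) (k : Fin (n + 1)) (y : ι → ℂ)
    (j : Fin n → ι) :
    U.curryMid k y (basisTuple j) = ∑ t, U (basisTuple (k.insertNth t j)) * y t := by
  have hy : y = ∑ t, y t • (Pi.single t 1 : ι → ℂ) := by
    simp [← Pi.single_smul, univ_sum_single]
  conv_lhs => rw [hy]
  simp [basisTuple_insertNth, mul_comm]

theorem sum_norm_apply_basisTuple_le
    (U : ContinuousMultilinearMap ℂ (fun _ : Fin 1 ↦ ι → ℂ) ℂ) :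
    ∑ i, ‖U (basisTuple i)‖ ≤ ‖U‖ := by
  choose c hc hcU using fun t ↦
    Complex.exists_norm_eq_mul_self (U (basisTuple ((0 : Fin 1).insertNth t ![])))
  have hsum : ((∑ i, ‖U (basisTuple i)‖ : ℝ) : ℂ) = U.curryMid 0 c (basisTuple ![]) := by
    rw [curryMid_apply_basisTuple, sum_fin_succ_eq_sum_insertNth 0, Fintype.sum_unique]
    push_cast
    exact sum_congr rfl fun t _ ↦ by rw [mul_comm, ← hcU, Subsingleton.elim default ![]]
  calc ∑ i, ‖U (basisTuple i)‖
    _ = ‖U.curryMid 0 c (basisTuple ![])‖ := by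
        rw [← hsum, Complex.norm_of_nonneg (by positivity)]
    _ ≤ ‖U.curryMid 0 c‖ := by
        simpa using (U.curryMid 0 c).le_opNorm (basisTuple ![])
    _ ≤ ‖U‖ := norm_curryMid_apply_le U 0
        ((pi_norm_le_iff_of_nonneg zero_le_one).2 fun t ↦ (hc t).le)

theorem rpow_sum_sq_le_expect_curryMid {n : ℕ} (hn : n ≠ 0)
    (U : ContinuousMultilinearMap ℂ (fun _ : Fin (n + 1) ↦ ι → ℂ) ℂ) (k : Fin (n + 1))
    (j : Fin n → ι) :
    (∑ t, ‖U (basisTuple (k.insertNth t j))‖ ^ 2) ^ (n / (n + 1) : ℝ) ≤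
      (exp (79 / 300 / n) ^ 2) ^ (n / (n + 1) : ℝ) *
        𝔼 ω : ι → ZMod 5, (‖U.curryMid k (fun t ↦ ZMod.stdAddChar (ω t)) (basisTuple j)‖ ^ 2) ^
          (n / (n + 1) : ℝ) := by
  have hexponent : (n / (n + 1) : ℝ) ≤ 1 := div_le_one_of_le₀ (by linarith) (by positivity)
  have h := rpow_sum_sq_le_expect_steinhaus (K := 5) (by lia) (p := 2 * (n / (n + 1)))
    (by positivity) (by linarith) fun t ↦ U (basisTuple (k.insertNth t j))
  convert h using 2
  · ring
  · rw [← rpow_natCast, ← rpow_mul (exp_pos _).le, ← exp_mul]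
    congr 1
    push_cast
    field_simp
    ring
  · refine expect_congr rfl fun ω _ ↦ ?_
    rw [curryMid_apply_basisTuple, ← rpow_natCast_mul (norm_nonneg _), Nat.cast_two]

theorem sum_rpow_sum_sq_apply_basisTuple_le {n : ℕ} (hn : n ≠ 0) {C : ℝ} (hC : 0 ≤ C)
    (hV : ∀ V : ContinuousMultilinearMap ℂ (fun _ : Fin n ↦ ι → ℂ) ℂ,
      ∑ j, (‖V (basisTuple j)‖ ^ 2) ^ (n / (n + 1) : ℝ) ≤ ((C * ‖V‖) ^ 2) ^ (n / (n + 1) : ℝ))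
    (U : ContinuousMultilinearMap ℂ (fun _ : Fin (n + 1) ↦ ι → ℂ) ℂ) (k : Fin (n + 1)) :
    ∑ j, (∑ t, ‖U (basisTuple (k.insertNth t j))‖ ^ 2) ^ (n / (n + 1) : ℝ) ≤
      ((exp (79 / 300 / n) * C * ‖U‖) ^ 2) ^ (n / (n + 1) : ℝ) := by
  set y : (ι → ZMod 5) → ι → ℂ := fun ω t ↦ ZMod.stdAddChar (ω t)
  have hy (ω) : ‖U.curryMid k (y ω)‖ ≤ ‖U‖ :=
    norm_curryMid_apply_le U k ((pi_norm_le_iff_of_nonneg zero_le_one).2 fun t ↦ by simp [y])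
  calc _ ≤ ∑ j, (exp (79 / 300 / n) ^ 2) ^ (n / (n + 1) : ℝ) *
          𝔼 ω, (‖U.curryMid k (y ω) (basisTuple j)‖ ^ 2) ^ (n / (n + 1) : ℝ) :=
        sum_le_sum fun j _ ↦ rpow_sum_sq_le_expect_curryMid hn U k j
    _ = (exp (79 / 300 / n) ^ 2) ^ (n / (n + 1) : ℝ) *
          𝔼 ω, ∑ j, (‖U.curryMid k (y ω) (basisTuple j)‖ ^ 2) ^ (n / (n + 1) : ℝ) := by
        rw [← mul_sum, expect_sum_comm]
    _ ≤ (exp (79 / 300 / n) ^ 2) ^ (n / (n + 1) : ℝ) * ((C * ‖U‖) ^ 2) ^ (n / (n + 1) : ℝ) := by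
        gcongr
        refine expect_le univ_nonempty fun ω _ ↦ (hV _).trans ?_
        gcongr
        exact hy ω
    _ = ((exp (79 / 300 / n) * C * ‖U‖) ^ 2) ^ (n / (n + 1) : ℝ) := by
        rw [← mul_rpow (by positivity) (by positivity), ← mul_pow, mul_assoc]

theorem bohnenblust_hille {n : ℕ} (hn : n ≠ 0)
    (U : ContinuousMultilinearMap ℂ (fun _ : Fin n ↦ ι → ℂ) ℂ) :
    ∑ i, (‖U (basisTuple i)‖ ^ 2) ^ (n / (n + 1) : ℝ) ≤
      ((exp (79 / 300 * harmonic (n - 1)) * ‖U‖) ^ 2) ^ (n / (n + 1) : ℝ) := by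
  induction n, Nat.one_le_iff_ne_zero.2 hn using Nat.le_induction with
  | base =>
    have hsqrt {x : ℝ} (hx : 0 ≤ x) : (x ^ 2) ^ (1 + 1 : ℝ)⁻¹ = x := by
      rw [← rpow_natCast_mul hx]
      norm_num
    simpa [hsqrt] using sum_norm_apply_basisTuple_le U
  | succ n hn' ih =>
    have hn₀ : n ≠ 0 := by lia
    have hC : exp (79 / 300 * harmonic n) =
        exp (79 / 300 / n) * exp (79 / 300 * harmonic (n - 1)) := by
      obtain ⟨m, rfl⟩ := Nat.exists_eq_succ_of_ne_zero hn₀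
      rw [← exp_add, harmonic_succ]
      push_cast
      ring_nf
    have h := sum_norm_rpow_le_of_forall_sum_sum_sq_rpow_le hn₀
      (a := fun i ↦ U (basisTuple i)) (by positivity) fun k ↦
        sum_rpow_sum_sq_apply_basisTuple_le hn₀ (exp_pos _).le (ih hn₀) U k
    rw [Nat.add_sub_cancel, hC]
    push_cast
    rwa [add_assoc, one_add_one_eq_two]

end BohnenblustHille

theorem exp_harmonic_le {m : ℕ} (hm : 64 ≤ m) :
    exp (79 / 300 * harmonic m) ≤ 0.99632125476 * (m : ℝ) ^ (0.304975 : ℝ) := by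
  have hlog : 6 * log 2 ≤ log m := by
    rw [← log_rpow two_pos]
    exact log_le_log (by norm_num) (by norm_num; exact_mod_cast hm)
  have hharmonic : harmonic m - log m ≤ 761 / 280 - 3 * log 2 := by
    have h := strictAnti_eulerMascheroniSeq'.antitone (by lia : 8 ≤ m)
    have hH8 : harmonic 8 = 761 / 280 := by norm_num [harmonic, sum_range_succ]
    have hlog8 : log (8 : ℝ) = 3 * log 2 := by
      rw [show (8 : ℝ) = 2 ^ 3 by norm_num, log_pow]
      norm_num
    simpa [eulerMascheroniSeq', show m ≠ 0 by lia, hlog8, hH8, -harmonic_succ] using h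
  have hconst : -0.0037 ≤ log 0.99632125476 :=
    le_trans (by norm_num) (one_sub_inv_le_log_of_pos (by norm_num))
  rw [← exp_log (by norm_num : (0 : ℝ) < 0.99632125476), rpow_def_of_pos (by positivity),
    ← exp_add, exp_le_exp]
  linarith [log_two_gt_d9]

theorem stmt12_general {ι : Type*} [Fintype ι] [DecidableEq ι] {n : ℕ} (hn : n ≠ 0)
    (U : ContinuousMultilinearMap ℂ (fun _ : Fin n ↦ ι → ℂ) ℂ) :
    (∑ i, ‖U (basisTuple i)‖ ^ ((2 * n : ℝ) / (n + 1))) ^ ((n + 1 : ℝ) / (2 * n)) ≤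
      exp (79 / 300 * harmonic (n - 1)) * ‖U‖ := by
  have hpow {x : ℝ} (hx : 0 ≤ x) :
      (x ^ 2) ^ (n / (n + 1) : ℝ) = x ^ ((2 * n : ℝ) / (n + 1)) := by
    rw [← rpow_natCast_mul hx, Nat.cast_two, mul_div_assoc]
  rw [← inv_div (2 * n : ℝ), rpow_inv_le_iff_of_pos (by positivity) (by positivity) (by positivity),
    ← hpow (by positivity)]
  simpa only [hpow (norm_nonneg _)] using bohnenblust_hille hn U

theorem stmt12 (n : ℕ) (hn : 2 ^ 6 < n) (N : ℕ) (hN : 0 < N)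
    (U : ContinuousMultilinearMap ℂ (fun _ : Fin n => (Fin N → ℂ)) ℂ) :
    BHcomplex n N U ≤ 0.99632125476 * ((n : ℝ) - 1) ^ (0.304975 : ℝ) * ‖U‖ := by
  have hconst := exp_harmonic_le (Nat.le_sub_one_of_lt hn)
  rw [Nat.cast_pred (by lia)] at hconst
  exact (stmt12_general (by lia) U).trans (mul_le_mul_of_nonneg_right hconst (norm_nonneg U))
end
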